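/- For j = 1,2, let c_j be a wave speed (for the same constant c0 > 0), let f_j ∈ C²([0,∞)) be not identically zero with supp f_j ⊂ (0,1), and let u_j be a classical solution of the half-line wave problem for (c_j, f_j) that decays exponentially near the boundary region. If u_1(t,1) = u_2(t,1) for all t ≥ 0, then f_1 = f_2 and c_1 = c_2. -/

import Mathlib

open Set

/-- `c` is a wave speed for the constant `c0 > 0`: a positive `C²` function on `[0,∞)`
equal to `c0` outside `(0,1)`. -/
def IsWaveSpeed (c0 : ℝ) (c : ℝ → ℝ) : Prop :=
  ContDiffOn ℝ 2 c (Ici 0) ∧ (∀ x ∈ Ici (0:ℝ), 0 < c x) ∧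
    ∀ x ∈ Ici (0:ℝ), x ∉ Ioo (0:ℝ) 1 → c x = c0

/-- `u` is a classical solution of the half-line wave problem for `(c, f)`. -/
def IsWaveSolution (c : ℝ → ℝ) (f : ℝ → ℝ) (u : ℝ → ℝ → ℝ) : Prop :=
  ContDiffOn ℝ 2 (Function.uncurry u) (Ici 0 ×ˢ Ici 0) ∧
  (∀ t > (0:ℝ), ∀ x > (0:ℝ),
      deriv (fun s => deriv (fun r => u r x) s) t
        = (c x)^2 * deriv (fun y => deriv (fun w => u t w) y) x) ∧
  (∀ x ∈ Ici (0:ℝ), u 0 x = f x) ∧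
  (∀ x ∈ Ici (0:ℝ), derivWithin (fun s => u s x) (Ici 0) 0 = 0) ∧
  (∀ t ∈ Ici (0:ℝ), u t 0 = 0)

/-- `u` decays exponentially near the boundary region `[0,1]`. -/
def DecaysExp (u : ℝ → ℝ → ℝ) : Prop :=
  ∃ C > (0:ℝ), ∃ κ > (0:ℝ), ∀ t ∈ Ici (0:ℝ), ∀ x ∈ Icc (0:ℝ) 1,
    |u t x| + |derivWithin (fun y => u t y) (Ici 0) x| ≤ C * Real.exp (-κ * t)

/-!
Because of the decay, the cosine transform in time of a wave exists and solves the string equation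
`y'' = -τ² c⁻² y` on `[0, b]` (with `b = 1`) with `y 0 = 0`. To the right of `b` the medium is
homogeneous and initially at rest, so the wave is outgoing there, `u_t + c0 u_x = 0`, and the trace
of `u` at `b` determines the Cauchy data of its transform at `b`. If two waves have the same trace,
the solutions of the two string equations with these Cauchy data both vanish at `0`. The Cauchy data
are nonzero for all `τ` in some interval, so there the determinant of the fundamental solutions of
the two equations at `0` vanishes for `z = -τ²`, hence for all `z` because it is entire in `z`.

That the speeds agree is then a theorem of Borg–Marchenko type: the same determinant taken at two
points with equal travel times to `b` is an entire function of `z` of order `1/2`, bounded for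
`z ≥ 0` and tending to `0` as `z → -∞`. By Phragmén–Lindelöf it vanishes, and at `z = 0` it is the
difference of the two points. Once the speeds agree, so do the transforms on `[0, b]`, and inverting
the cosine transform gives the initial data.
-/

section Wave

open Filter Topology MeasureTheory
section Calculus

variable {a b : ℝ}

lemma monotoneOn_Icc_of_hasDerivAt_nonneg {f f' : ℝ → ℝ} (hf : ContinuousOn f (Icc a b))
    (hd : ∀ x ∈ Ioo a b, HasDerivAt f (f' x) x) (hn : ∀ x ∈ Ioo a b, 0 ≤ f' x) :
    MonotoneOn f (Icc a b) := by
  refine monotoneOn_of_hasDerivWithinAt_nonneg (convex_Icc a b) hf (f' := f') ?_ ?_ <;>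
    rw [interior_Icc]
  · exact fun x hx => (hd x hx).hasDerivWithinAt
  · exact hn

lemma eq_right_of_hasDerivAt_zero {f : ℝ → ℝ} (hf : ContinuousOn f (Icc a b))
    (hd : ∀ x ∈ Ioo a b, HasDerivAt f 0 x) {x : ℝ} (hx : x ∈ Icc a b) : f x = f b := by
  have hb : b ∈ Icc a b := right_mem_Icc.2 (hx.1.trans hx.2)
  have h_le := monotoneOn_Icc_of_hasDerivAt_nonneg hf hd (fun _ _ => le_rfl) hx hb hx.2
  have h_ge := monotoneOn_Icc_of_hasDerivAt_nonneg hf.neg (fun x hx => (hd x hx).neg)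
    (fun _ _ => neg_zero.ge) hx hb hx.2
  exact le_antisymm h_le (neg_le_neg_iff.1 h_ge)

lemma le_mul_exp_of_mul_le_deriv {F F' κ κ' : ℝ → ℝ}
    (hF : ContinuousOn F (Icc a b)) (hκ : ContinuousOn κ (Icc a b))
    (hF' : ∀ x ∈ Ioo a b, HasDerivAt F (F' x) x) (hκ' : ∀ x ∈ Ioo a b, HasDerivAt κ (κ' x) x)
    (h : ∀ x ∈ Ioo a b, κ' x * F x ≤ F' x) {x : ℝ} (hx : x ∈ Icc a b) :
    F x ≤ F b * Real.exp (κ x - κ b) := by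
  have hmono : MonotoneOn (fun x => F x * Real.exp (-κ x)) (Icc a b) := by
    refine monotoneOn_Icc_of_hasDerivAt_nonneg (hF.mul hκ.neg.rexp)
      (fun y hy => (hF' y hy).mul (hκ' y hy).neg.exp) fun y hy => ?_
    refine (mul_nonneg (sub_nonneg.2 (h y hy)) (Real.exp_pos (-κ y)).le).trans_eq ?_
    simp only [Pi.neg_apply]
    ring
  have hxb : F x * Real.exp (-κ x) ≤ F b * Real.exp (-κ b) :=
    hmono hx (right_mem_Icc.2 (hx.1.trans hx.2)) hx.2
  calc F x = F x * Real.exp (-κ x) * Real.exp (κ x) := by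
        rw [mul_assoc, ← Real.exp_add, neg_add_cancel, Real.exp_zero, mul_one]
    _ ≤ F b * Real.exp (-κ b) * Real.exp (κ x) := by gcongr
    _ = F b * Real.exp (κ x - κ b) := by rw [mul_assoc, ← Real.exp_add, neg_add_eq_sub]

lemma intervalIntegrable_right_of_continuousOn {g : ℝ → ℝ} (hg : ContinuousOn g (Icc a b)) {x : ℝ}
    (hx : x ∈ Icc a b) : IntervalIntegrable g volume b x :=
  (hg.mono (uIcc_of_ge hx.2 ▸ Icc_subset_Icc_left hx.1)).intervalIntegrable

lemma continuousOn_integral_right {g : ℝ → ℝ} (hg : ContinuousOn g (Icc a b)) :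
    ContinuousOn (fun x => ∫ t in b..x, g t) (Icc a b) := by
  rcases le_or_gt a b with hab | hab
  · have hi : IntervalIntegrable g volume a b :=
      (intervalIntegrable_right_of_continuousOn hg (left_mem_Icc.2 hab)).symm
    simpa only [uIcc_of_le hab] using
      intervalIntegral.continuousOn_primitive_interval' hi right_mem_uIcc
  · simp only [Icc_eq_empty (not_le.2 hab), continuousOn_empty]

lemma hasDerivAt_integral_right {g : ℝ → ℝ} (hg : ContinuousOn g (Icc a b)) {x : ℝ}
    (hx : x ∈ Ioo a b) : HasDerivAt (fun x => ∫ t in b..x, g t) (g x) x :=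
  intervalIntegral.integral_hasDerivAt_right
    (intervalIntegrable_right_of_continuousOn hg (Ioo_subset_Icc_self hx))
    ((hg.mono Ioo_subset_Icc_self).stronglyMeasurableAtFilter isOpen_Ioo x hx)
    (hg.continuousAt (Icc_mem_nhds hx.1 hx.2))

lemma abs_integral_le_pow_div_factorial {g : ℝ → ℝ} (hg : ContinuousOn g (Icc a b)) {C : ℝ}
    {k : ℕ} (h : ∀ t ∈ Icc a b, |g t| ≤ C * ((b - t) ^ k / k.factorial)) {x : ℝ}
    (hx : x ∈ Icc a b) :
    |∫ t in b..x, g t| ≤ C * ((b - x) ^ (k + 1) / (k + 1).factorial) := by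
  have hprim (y : ℝ) : HasDerivAt (fun y => -(C * ((b - y) ^ (k + 1) / (k + 1).factorial)))
      (C * ((b - y) ^ k / k.factorial)) y := by
    refine ((((((hasDerivAt_id y).const_sub b).pow (k + 1)).div_const
      ((k + 1).factorial : ℝ)).const_mul C).neg).congr_deriv ?_
    simp only [Nat.cast_add, Nat.cast_one, id_eq, add_tsub_cancel_right, mul_neg, mul_one,
      Nat.factorial_succ, Nat.cast_mul]
    field_simp
  have hbound : Continuous fun t : ℝ => C * ((b - t) ^ k / (k.factorial : ℝ)) := by fun_prop
  have hg_abs : IntervalIntegrable (fun t => |g t|) volume x b :=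
    (intervalIntegrable_right_of_continuousOn hg hx).symm.abs
  calc |∫ t in b..x, g t| ≤ ∫ t in x..b, |g t| := by
        rw [intervalIntegral.integral_symm, abs_neg]
        exact intervalIntegral.abs_integral_le_integral_abs hx.2
    _ ≤ ∫ t in x..b, C * ((b - t) ^ k / k.factorial) :=
        intervalIntegral.integral_mono_on hx.2 hg_abs (hbound.intervalIntegrable _ _)
          fun t ht => h t ⟨hx.1.trans ht.1, ht.2⟩
    _ = C * ((b - x) ^ (k + 1) / (k + 1).factorial) := by
        rw [intervalIntegral.integral_eq_sub_of_hasDerivAt (fun y _ => hprim y)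
          (hbound.intervalIntegrable _ _)]
        simp

lemma hasSum_integral_right {g : ℕ → ℝ → ℝ} {u : ℕ → ℝ} (hg : ∀ n, ContinuousOn (g n) (Icc a b))
    (hu : Summable u) (hgu : ∀ n, ∀ t ∈ Icc a b, |g n t| ≤ u n) {x : ℝ} (hx : x ∈ Icc a b) :
    HasSum (fun n => ∫ t in b..x, g n t) (∫ t in b..x, ∑' n, g n t) := by
  have hsub : uIoc b x ⊆ Icc a b := by
    rw [uIoc_of_ge hx.2]
    exact Ioc_subset_Icc_self.trans (Icc_subset_Icc_left hx.1)
  refine intervalIntegral.hasSum_integral_of_dominated_convergence (fun n _ => u n)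
    (fun n => (intervalIntegrable_right_of_continuousOn (hg n) hx).def'.aestronglyMeasurable)
    (fun n => .of_forall fun t ht => hgu n t (hsub ht)) (.of_forall fun _ _ => hu)
    intervalIntegrable_const (.of_forall fun t ht => ?_)
  exact (Summable.of_norm_bounded hu fun n => hgu n t (hsub ht)).hasSum

lemma hasSum_integral_integral_right {g : ℕ → ℝ → ℝ} {u : ℕ → ℝ}
    (hg : ∀ n, ContinuousOn (g n) (Icc a b)) (hu : Summable u)
    (hgu : ∀ n, ∀ t ∈ Icc a b, |g n t| ≤ u n) {x : ℝ} (hx : x ∈ Icc a b) :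
    HasSum (fun n => ∫ t in b..x, ∫ s in b..t, g n s) (∫ t in b..x, ∫ s in b..t, ∑' n, g n s) := by
  have hbound (n : ℕ) : ∀ t ∈ Icc a b, |∫ s in b..t, g n s| ≤ u n * (b - a) := by
    intro t ht
    have hub : ∀ s ∈ Icc a b, |g n s| ≤ u n * ((b - s) ^ 0 / (0).factorial) := by
      simpa using hgu n
    calc |∫ s in b..t, g n s| ≤ u n * (b - t) := by
          simpa using abs_integral_le_pow_div_factorial (hg n) hub ht
      _ ≤ u n * (b - a) := by
          have := (abs_nonneg _).trans (hgu n t ht)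
          have := ht.1
          gcongr
  have hinner : ∫ t in b..x, ∑' n, ∫ s in b..t, g n s = ∫ t in b..x, ∫ s in b..t, ∑' n, g n s := by
    refine intervalIntegral.integral_congr fun t ht => (hasSum_integral_right hg hu hgu ?_).tsum_eq
    exact Icc_subset_Icc_left hx.1 (uIcc_of_ge hx.2 ▸ ht)
  rw [← hinner]
  exact hasSum_integral_right (fun n => continuousOn_integral_right (hg n)) (hu.mul_right (b - a))
    hbound hx

end Calculus

/-- `y` solves the string equation `y'' = z r y` on `[a, b]`, with derivative `y'`. The derivative
is recorded separately so that its boundary values are meaningful. -/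
structure IsStringSolution (r : ℝ → ℝ) (a b z : ℝ) (y y' : ℝ → ℝ) : Prop where
  continuousOn : ContinuousOn y (Icc a b)
  continuousOn_deriv : ContinuousOn y' (Icc a b)
  hasDerivAt : ∀ x ∈ Ioo a b, HasDerivAt y (y' x) x
  hasDerivAt_deriv : ∀ x ∈ Ioo a b, HasDerivAt y' (z * r x * y x) x

namespace IsStringSolution

variable {r : ℝ → ℝ} {a b z x : ℝ} {y y' w w' : ℝ → ℝ}

lemma wronskian_eq (hy : IsStringSolution r a b z y y') (hw : IsStringSolution r a b z w w')
    (hx : x ∈ Icc a b) : y x * w' x - y' x * w x = y b * w' b - y' b * w b := by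
  refine eq_right_of_hasDerivAt_zero (f := fun x => y x * w' x - y' x * w x)
    ((hy.continuousOn.mul hw.continuousOn_deriv).sub (hy.continuousOn_deriv.mul hw.continuousOn))
    (fun t ht => ?_) hx
  refine (((hy.hasDerivAt t ht).mul (hw.hasDerivAt_deriv t ht)).sub
    ((hy.hasDerivAt_deriv t ht).mul (hw.hasDerivAt t ht))).congr_deriv ?_
  ring

lemma eq_combination {θ θ' φ φ' : ℝ → ℝ} (hy : IsStringSolution r a b z y y')
    (hθ : IsStringSolution r a b z θ θ') (hφ : IsStringSolution r a b z φ φ') (hθb : θ b = 1)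
    (hθb' : θ' b = 0) (hφb : φ b = 0) (hφb' : φ' b = 1) (hx : x ∈ Icc a b) :
    y x = y b * θ x + y' b * φ x := by
  have hyφ := hy.wronskian_eq hφ hx
  have hyθ := hy.wronskian_eq hθ hx
  have hθφ := hθ.wronskian_eq hφ hx
  rw [hφb, hφb'] at hyφ
  rw [hθb, hθb'] at hyθ
  rw [hθb, hθb', hφb, hφb'] at hθφ
  linear_combination θ x * hyφ - φ x * hyθ - y x * hθφ

lemma congr_density {r₂ : ℝ → ℝ} (hy : IsStringSolution r a b z y y') (hr : EqOn r r₂ (Ioo a b)) :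
    IsStringSolution r₂ a b z y y' where
  continuousOn := hy.continuousOn
  continuousOn_deriv := hy.continuousOn_deriv
  hasDerivAt := hy.hasDerivAt
  hasDerivAt_deriv t ht := by simpa only [hr ht] using! hy.hasDerivAt_deriv t ht

lemma add_const_mul (hy : IsStringSolution r a b z y y') (hw : IsStringSolution r a b z w w')
    (μ : ℝ) : IsStringSolution r a b z (fun x => y x + μ * w x) (fun x => y' x + μ * w' x) where
  continuousOn := hy.continuousOn.add (hw.continuousOn.const_mul μ)
  continuousOn_deriv := hy.continuousOn_deriv.add (hw.continuousOn_deriv.const_mul μ)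
  hasDerivAt t ht := (hy.hasDerivAt t ht).add ((hw.hasDerivAt t ht).const_mul μ)
  hasDerivAt_deriv t ht :=
    ((hy.hasDerivAt_deriv t ht).add ((hw.hasDerivAt_deriv t ht).const_mul μ)).congr_deriv (by ring)

lemma monotoneOn_mul_deriv (hy : IsStringSolution r a b z y y')
    (hzr : ∀ x ∈ Ioo a b, 0 ≤ z * r x) : MonotoneOn (fun x => y x * y' x) (Icc a b) := by
  refine monotoneOn_Icc_of_hasDerivAt_nonneg (hy.continuousOn.mul hy.continuousOn_deriv)
    (fun t ht => (hy.hasDerivAt t ht).mul (hy.hasDerivAt_deriv t ht)) fun t ht => ?_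
  nlinarith [mul_nonneg (hzr t ht) (sq_nonneg (y t)), sq_nonneg (y' t)]

lemma mul_deriv_nonneg (hy : IsStringSolution r a b z y y') (hzr : ∀ x ∈ Ioo a b, 0 ≤ z * r x)
    (hya : y a = 0) (hx : x ∈ Icc a b) : 0 ≤ y x * y' x := by
  simpa only [hya, zero_mul] using
    hy.monotoneOn_mul_deriv hzr (left_mem_Icc.2 (hx.1.trans hx.2)) hx hx.1

lemma mul_deriv_nonpos (hy : IsStringSolution r a b z y y') (hzr : ∀ x ∈ Ioo a b, 0 ≤ z * r x)
    (hyb : y b = 0) (hx : x ∈ Icc a b) : y x * y' x ≤ 0 := by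
  simpa only [hyb, zero_mul] using
    hy.monotoneOn_mul_deriv hzr hx (right_mem_Icc.2 (hx.1.trans hx.2)) hx.2

lemma left_ne_zero (hy : IsStringSolution r a b z y y') (hzr : ∀ x ∈ Ioo a b, 0 ≤ z * r x)
    (hab : a < b) (hyb : y b = 0) (hyb' : y' b ≠ 0) : y a ≠ 0 := by
  intro hya
  have hmul : ∀ x ∈ Icc a b, y x * y' x = 0 := fun x hx =>
    le_antisymm (hy.mul_deriv_nonpos hzr hyb hx) (hy.mul_deriv_nonneg hzr hya hx)
  have hderiv : ∀ x ∈ Ioo a b, y' x = 0 := fun x hx => by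
    have hd := ((hy.hasDerivAt x hx).mul (hy.hasDerivAt_deriv x hx)).unique
      ((hasDerivAt_const x (0 : ℝ)).congr_of_eventuallyEq <| by
        filter_upwards [Ioo_mem_nhds hx.1 hx.2] with t ht
        exact hmul t (Ioo_subset_Icc_self ht))
    nlinarith [mul_nonneg (hzr x hx) (sq_nonneg (y x)), sq_nonneg (y' x)]
  have hclosed : EqOn y' (fun _ => 0) (Icc a b) :=
    Set.EqOn.of_subset_closure hderiv hy.continuousOn_deriv continuousOn_const
      Ioo_subset_Icc_self (closure_Ioo hab.ne).ge
  exact hyb' (hclosed (right_mem_Icc.2 hab.le))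

lemma le_right (hy : IsStringSolution r a b z y y') (hzr : ∀ x ∈ Ioo a b, 0 ≤ z * r x)
    (hya : y a = 0) (hyb : 0 ≤ y b) (hx : x ∈ Icc a b) : y x ≤ y b := by
  have hmono : MonotoneOn (fun x => y x ^ 2) (Icc a b) := by
    refine monotoneOn_Icc_of_hasDerivAt_nonneg (hy.continuousOn.pow 2)
      (fun t ht => (hy.hasDerivAt t ht).pow 2) fun t ht => ?_
    have := hy.mul_deriv_nonneg hzr hya (Ioo_subset_Icc_self ht)
    norm_num
    linarith
  exact le_of_sq_le_sq (hmono hx (right_mem_Icc.2 (hx.1.trans hx.2)) hx.2) hyb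

/- The mean slope `y b / (b - a)` is attained, and `y''` is at most `Z * y b`. -/
lemma deriv_right_le (hy : IsStringSolution r a b z y y') (hzr : ∀ x ∈ Ioo a b, 0 ≤ z * r x)
    (hab : a < b) (hya : y a = 0) (hyb : 0 ≤ y b) {Z : ℝ} (hZ : ∀ x ∈ Ioo a b, z * r x ≤ Z) :
    y' b ≤ (1 / (b - a) + Z * (b - a)) * y b := by
  obtain ⟨ξ, hξ, hslope⟩ := exists_hasDerivAt_eq_slope y y' hab hy.continuousOn hy.hasDerivAt
  have hmono : MonotoneOn (fun x => Z * y b * x - y' x) (Icc a b) := by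
    refine monotoneOn_Icc_of_hasDerivAt_nonneg
      ((continuousOn_const.mul continuousOn_id).sub hy.continuousOn_deriv)
      (fun t ht => ((hasDerivAt_id t).const_mul (Z * y b)).sub (hy.hasDerivAt_deriv t ht))
      fun t ht => ?_
    have : z * r t * y t ≤ Z * y b :=
      (mul_le_mul_of_nonneg_left (hy.le_right hzr hya hyb (Ioo_subset_Icc_self ht))
        (hzr t ht)).trans
        (mul_le_mul_of_nonneg_right (hZ t ht) hyb)
    linarith
  have hξb : Z * y b * ξ - y' ξ ≤ Z * y b * b - y' b :=
    hmono (Ioo_subset_Icc_self hξ) (right_mem_Icc.2 hab.le) hξ.2.le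
  have hZ0 : 0 ≤ Z * y b := mul_nonneg ((hzr ξ hξ).trans (hZ ξ hξ)) hyb
  calc y' b ≤ y' ξ + Z * y b * (b - ξ) := by linarith
    _ ≤ y b / (b - a) + Z * y b * (b - a) := by
        rw [hslope, hya, sub_zero]
        gcongr
        exact hξ.1.le
    _ = (1 / (b - a) + Z * (b - a)) * y b := by ring

end IsStringSolution

section Series

variable {r : ℝ → ℝ} {a b : ℝ}

/-- Coefficients, as functions of `x`, of the expansion in powers of `z` of the solution of
`y'' = z r y` with Cauchy data `y b = α`, `y' b = β`. -/
noncomputable def stringCoeff (r : ℝ → ℝ) (b α β : ℝ) : ℕ → ℝ → ℝ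
  | 0 => fun x => α + β * (x - b)
  | n + 1 => fun x => ∫ t in b..x, ∫ s in b..t, r s * stringCoeff r b α β n s

/-- The solution of `y'' = z r y` with Cauchy data `y b = α`, `y' b = β`, as an entire function of
the spectral parameter `z`, which may be real or complex. -/
noncomputable def stringSeries {𝕜 : Type*} [RCLike 𝕜] (r : ℝ → ℝ) (b α β : ℝ) (z : 𝕜) (x : ℝ) : 𝕜 :=
  ∑' n, (stringCoeff r b α β n x : 𝕜) * z ^ n

/-- The derivative in `x` of `stringSeries`, in integrated form. -/
noncomputable def stringSeriesDeriv (r : ℝ → ℝ) (b α β z x : ℝ) : ℝ :=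
  β + z * ∫ s in b..x, r s * stringSeries r b α β z s

lemma continuousOn_stringCoeff (hr : ContinuousOn r (Icc a b)) (α β : ℝ) :
    ∀ n, ContinuousOn (stringCoeff r b α β n) (Icc a b)
  | 0 => by unfold stringCoeff; fun_prop
  | n + 1 => continuousOn_integral_right
      (continuousOn_integral_right (hr.mul (continuousOn_stringCoeff hr α β n)))

lemma abs_stringCoeff_le (hr : ContinuousOn r (Icc a b)) (α β : ℝ) {R : ℝ}
    (hR : ∀ x ∈ Icc a b, |r x| ≤ R) (n : ℕ) : ∀ x ∈ Icc a b, |stringCoeff r b α β n x| ≤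
      (|α| + |β| * (b - a)) * R ^ n * ((b - x) ^ (2 * n) / (2 * n).factorial) := by
  induction n with
  | zero =>
    intro x hx
    have hxb : |x - b| ≤ b - a := by rw [abs_sub_comm, abs_of_nonneg] <;> linarith [hx.1, hx.2]
    calc |α + β * (x - b)| ≤ |α| + |β| * |x - b| := (abs_add_le _ _).trans_eq (by rw [abs_mul])
      _ ≤ |α| + |β| * (b - a) := by gcongr
      _ = _ := by simp
  | succ n ih =>
    have hcoeff := hr.mul (continuousOn_stringCoeff hr α β n)
    refine fun x hx => abs_integral_le_pow_div_factorial (continuousOn_integral_right hcoeff)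
      (fun t ht => abs_integral_le_pow_div_factorial hcoeff (fun s hs => ?_) ht) hx
    calc |r s * stringCoeff r b α β n s| = |r s| * |stringCoeff r b α β n s| := abs_mul _ _
      _ ≤ R * ((|α| + |β| * (b - a)) * R ^ n * ((b - s) ^ (2 * n) / (2 * n).factorial)) :=
        mul_le_mul (hR s hs) (ih s hs) (abs_nonneg _) ((abs_nonneg _).trans (hR s hs))
      _ = (|α| + |β| * (b - a)) * R ^ (n + 1) * ((b - s) ^ (2 * n) / (2 * n).factorial) := by ring

lemma exists_abs_stringCoeff_le (hr : ContinuousOn r (Icc a b)) (α β : ℝ) :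
    ∃ A B : ℝ, 0 ≤ A ∧ 0 ≤ B ∧ ∀ n, ∀ x ∈ Icc a b,
      |stringCoeff r b α β n x| ≤ A * (B ^ (2 * n) / (2 * n).factorial) := by
  obtain ⟨R, hR⟩ := isCompact_Icc.exists_bound_of_continuousOn hr
  refine ⟨|α| + |β| * |b - a|, √R * |b - a|, by positivity, by positivity, fun n x hx => ?_⟩
  have hR0 : 0 ≤ R := (norm_nonneg _).trans (hR x hx)
  have hab : |b - a| = b - a := abs_of_nonneg (sub_nonneg.2 (hx.1.trans hx.2))
  calc |stringCoeff r b α β n x|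
      ≤ (|α| + |β| * (b - a)) * R ^ n * ((b - x) ^ (2 * n) / (2 * n).factorial) :=
        abs_stringCoeff_le hr α β hR n x hx
    _ ≤ (|α| + |β| * |b - a|) * R ^ n * (|b - a| ^ (2 * n) / (2 * n).factorial) := by
        rw [hab]
        have := hx.1
        have := sub_nonneg.2 hx.2
        have := hab ▸ abs_nonneg (b - a)
        gcongr
    _ = (|α| + |β| * |b - a|) * ((√R * |b - a|) ^ (2 * n) / (2 * n).factorial) := by
        rw [mul_pow, pow_mul √R, Real.sq_sqrt hR0]
        ring

lemma exists_summable_norm_stringCoeff_mul_pow_le (𝕜 : Type*) [RCLike 𝕜]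
    (hr : ContinuousOn r (Icc a b)) (α β ρ : ℝ) :
    ∃ u : ℕ → ℝ, Summable u ∧ ∀ n, ∀ x ∈ Icc a b, ∀ z : 𝕜, ‖z‖ ≤ ρ →
      ‖(stringCoeff r b α β n x : 𝕜) * z ^ n‖ ≤ u n := by
  obtain ⟨A, B, -, -, hAB⟩ := exists_abs_stringCoeff_le hr α β
  have hcosh : Summable fun n : ℕ => A * ((B * √ρ) ^ (2 * n) / (2 * n).factorial) :=
    (Real.hasSum_cosh (B * √ρ)).summable.mul_left A
  refine ⟨_, hcosh, fun n x hx z hz => ?_⟩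
  have hpow : √ρ ^ (2 * n) = ρ ^ n := by rw [pow_mul, Real.sq_sqrt ((norm_nonneg z).trans hz)]
  calc ‖(stringCoeff r b α β n x : 𝕜) * z ^ n‖ = |stringCoeff r b α β n x| * ‖z‖ ^ n := by
        rw [norm_mul, norm_pow, RCLike.norm_ofReal]
    _ ≤ A * (B ^ (2 * n) / (2 * n).factorial) * ρ ^ n :=
        mul_le_mul (hAB n x hx) (by gcongr) (by positivity) ((abs_nonneg _).trans (hAB n x hx))
    _ = A * ((B * √ρ) ^ (2 * n) / (2 * n).factorial) := by rw [mul_pow, hpow]; ring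

lemma stringSeries_zero {𝕜 : Type*} [RCLike 𝕜] (α β x : ℝ) :
    stringSeries r b α β (0 : 𝕜) x = ((α + β * (x - b) : ℝ) : 𝕜) := by
  rw [stringSeries, tsum_eq_single 0 fun n hn => by rw [zero_pow hn, mul_zero], pow_zero, mul_one]
  rfl

lemma stringSeries_ofReal (α β z x : ℝ) :
    stringSeries r b α β (z : ℂ) x = (stringSeries r b α β z x : ℝ) := by
  simp only [stringSeries, RCLike.ofReal_real_eq_id, id_eq, Complex.ofReal_tsum,
    Complex.ofReal_mul, Complex.ofReal_pow, Complex.coe_algebraMap]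

lemma continuousOn_stringSeries (hr : ContinuousOn r (Icc a b)) (α β z : ℝ) :
    ContinuousOn (stringSeries r b α β z) (Icc a b) := by
  obtain ⟨u, hu, hle⟩ := exists_summable_norm_stringCoeff_mul_pow_le ℝ hr α β ‖z‖
  exact continuousOn_tsum (fun n => (continuousOn_stringCoeff hr α β n).mul_const (z ^ n)) hu
    fun n x hx => hle n x hx z le_rfl

lemma hasSum_stringCoeff_succ_mul_pow (hr : ContinuousOn r (Icc a b)) (α β z : ℝ) {x : ℝ}
    (hx : x ∈ Icc a b) : HasSum (fun n => stringCoeff r b α β (n + 1) x * z ^ n)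
      (∫ t in b..x, ∫ s in b..t, r s * stringSeries r b α β z s) := by
  obtain ⟨u, hu, hle⟩ := exists_summable_norm_stringCoeff_mul_pow_le ℝ hr α β ‖z‖
  obtain ⟨R, hR⟩ := isCompact_Icc.exists_bound_of_continuousOn hr
  have hsum := hasSum_integral_integral_right (u := fun n => R * u n)
    (g := fun n s => r s * (stringCoeff r b α β n s * z ^ n))
    (fun n => hr.mul ((continuousOn_stringCoeff hr α β n).mul_const _)) (hu.mul_left R)
    (fun n t ht => (abs_mul _ _).trans_le (mul_le_mul (hR t ht) (hle n t ht z le_rfl)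
      (abs_nonneg _) ((norm_nonneg _).trans (hR t ht)))) hx
  simp only [tsum_mul_left] at hsum
  simpa only [← mul_assoc, intervalIntegral.integral_mul_const] using! hsum

lemma stringSeries_eq_integral_integral (hr : ContinuousOn r (Icc a b)) (α β z : ℝ) {x : ℝ}
    (hx : x ∈ Icc a b) : stringSeries r b α β z x =
      α + β * (x - b) + z * ∫ t in b..x, ∫ s in b..t, r s * stringSeries r b α β z s := by
  obtain ⟨u, hu, hle⟩ := exists_summable_norm_stringCoeff_mul_pow_le ℝ hr α β ‖z‖
  rw [stringSeries, (Summable.of_norm_bounded hu fun n => hle n x hx z le_rfl).tsum_eq_zero_add,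
    ← ((hasSum_stringCoeff_succ_mul_pow hr α β z hx).mul_left z).tsum_eq]
  simp only [stringCoeff, pow_zero, mul_one, pow_succ', mul_left_comm z]
  rfl

lemma stringSeries_eq_integral_deriv (hr : ContinuousOn r (Icc a b)) (α β z : ℝ) {x : ℝ}
    (hx : x ∈ Icc a b) :
    stringSeries r b α β z x = α + ∫ t in b..x, stringSeriesDeriv r b α β z t := by
  have hry : ContinuousOn (fun t => ∫ s in b..t, r s * stringSeries r b α β z s) (Icc a b) :=
    continuousOn_integral_right (hr.mul (continuousOn_stringSeries hr α β z))
  simp only [stringSeriesDeriv]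
  rw [stringSeries_eq_integral_integral hr α β z hx, intervalIntegral.integral_add
    intervalIntegrable_const ((intervalIntegrable_right_of_continuousOn hry hx).const_mul z),
    intervalIntegral.integral_const_mul, intervalIntegral.integral_const, smul_eq_mul]
  ring

lemma isStringSolution_stringSeries (hr : ContinuousOn r (Icc a b)) (α β z : ℝ) :
    IsStringSolution r a b z (stringSeries r b α β z) (stringSeriesDeriv r b α β z) := by
  have hry : ContinuousOn (fun x => r x * stringSeries r b α β z x) (Icc a b) :=
    hr.mul (continuousOn_stringSeries hr α β z)
  have hderiv : ContinuousOn (stringSeriesDeriv r b α β z) (Icc a b) :=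
    continuousOn_const.add (continuousOn_const.mul (continuousOn_integral_right hry))
  refine ⟨continuousOn_stringSeries hr α β z, hderiv, fun x hx => ?_, fun x hx => ?_⟩
  · refine ((hasDerivAt_integral_right hderiv hx).const_add α).congr_of_eventuallyEq ?_
    filter_upwards [Icc_mem_nhds hx.1 hx.2] with t ht
      using stringSeries_eq_integral_deriv hr α β z ht
  · rw [mul_assoc]
    exact ((hasDerivAt_integral_right hry hx).const_mul z).const_add β

lemma stringSeries_right {𝕜 : Type*} [RCLike 𝕜] (α β : ℝ) (z : 𝕜) :
    stringSeries r b α β z b = α := by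
  rw [stringSeries, tsum_eq_single 0]
  · simp [stringCoeff]
  · intro n hn
    obtain ⟨n, rfl⟩ := Nat.exists_eq_succ_of_ne_zero hn
    simp [stringCoeff]

lemma stringSeriesDeriv_right (α β z : ℝ) : stringSeriesDeriv r b α β z b = β := by
  simp [stringSeriesDeriv]

lemma IsStringSolution.eq_stringSeries_combination {z : ℝ} {y y' : ℝ → ℝ}
    (hy : IsStringSolution r a b z y y') (hr : ContinuousOn r (Icc a b)) (hx : x ∈ Icc a b) :
    y x = y b * stringSeries r b 1 0 z x + y' b * stringSeries r b 0 1 z x :=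
  hy.eq_combination (isStringSolution_stringSeries hr 1 0 z)
    (isStringSolution_stringSeries hr 0 1 z) (stringSeries_right ..) (stringSeriesDeriv_right ..)
    (stringSeries_right ..) (stringSeriesDeriv_right ..) hx

lemma differentiable_stringSeries (hr : ContinuousOn r (Icc a b)) (α β : ℝ) {x : ℝ}
    (hx : x ∈ Icc a b) : Differentiable ℂ fun z : ℂ => stringSeries r b α β z x := by
  intro z₀
  obtain ⟨u, hu, hle⟩ := exists_summable_norm_stringCoeff_mul_pow_le ℂ hr α β (‖z₀‖ + 1)
  have hball : DifferentiableOn ℂ (fun z : ℂ => stringSeries r b α β z x)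
      (Metric.ball 0 (‖z₀‖ + 1)) :=
    Complex.differentiableOn_tsum_of_summable_norm hu (fun n => by fun_prop) Metric.isOpen_ball
      fun n z hz => hle n x hx z (mem_ball_zero_iff.1 hz).le
  exact hball.differentiableAt (Metric.isOpen_ball.mem_nhds (by simp))

lemma exists_norm_stringSeries_sq_le (hr : ContinuousOn r (Icc a b)) (α β : ℝ) :
    ∃ A B : ℝ, 0 ≤ A ∧ 0 ≤ B ∧ ∀ x ∈ Icc a b, ∀ l : ℂ,
      ‖stringSeries r b α β (l ^ 2) x‖ ≤ A * Real.exp (B * ‖l‖) := by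
  obtain ⟨A, B, hA, hB, hAB⟩ := exists_abs_stringCoeff_le hr α β
  refine ⟨A, B, hA, hB, fun x hx l => ?_⟩
  have hterm (n : ℕ) : ‖(stringCoeff r b α β n x : ℂ) * (l ^ 2) ^ n‖ ≤
      A * ((B * ‖l‖) ^ (2 * n) / (2 * n).factorial) := by
    calc ‖(stringCoeff r b α β n x : ℂ) * (l ^ 2) ^ n‖
        = |stringCoeff r b α β n x| * ‖l‖ ^ (2 * n) := by
          rw [norm_mul, ← pow_mul, norm_pow, Complex.norm_real, Real.norm_eq_abs]
      _ ≤ A * (B ^ (2 * n) / (2 * n).factorial) * ‖l‖ ^ (2 * n) := by gcongr; exact hAB n x hx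
      _ = A * ((B * ‖l‖) ^ (2 * n) / (2 * n).factorial) := by rw [mul_pow]; ring
  refine (tsum_of_norm_bounded ((Real.hasSum_cosh (B * ‖l‖)).mul_left A) hterm).trans ?_
  gcongr
  rw [← sub_nonneg, Real.exp_sub_cosh]
  exact Real.sinh_nonneg_iff.2 (by positivity)

end Series

section Determinant

variable {r₁ r₂ : ℝ → ℝ} {a b x₁ x₂ : ℝ} {𝕜 : Type*} [RCLike 𝕜]

/-- For `θᵢ`, `φᵢ` the solutions of `y'' = z rᵢ y` with Cauchy data `(1, 0)`, `(0, 1)` at `b`, this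
is `θ₁(x₁) φ₂(x₂) - θ₂(x₂) φ₁(x₁)`. It vanishes iff some nonzero Cauchy data at `b` is shared by
solutions of the two equations vanishing at `x₁` and at `x₂` respectively. -/
noncomputable def stringDet (r₁ r₂ : ℝ → ℝ) (b x₁ x₂ : ℝ) (z : 𝕜) : 𝕜 :=
  stringSeries r₁ b 1 0 z x₁ * stringSeries r₂ b 0 1 z x₂ -
    stringSeries r₂ b 1 0 z x₂ * stringSeries r₁ b 0 1 z x₁

lemma stringDet_zero : stringDet r₁ r₂ b x₁ x₂ (0 : 𝕜) = ((x₂ - x₁ : ℝ) : 𝕜) := by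
  simp only [stringDet, stringSeries_zero, ← RCLike.ofReal_mul, ← RCLike.ofReal_sub]
  congr 1
  ring

lemma stringDet_ofReal (z : ℝ) :
    stringDet r₁ r₂ b x₁ x₂ (z : ℂ) = (stringDet r₁ r₂ b x₁ x₂ z : ℝ) := by
  simp only [stringDet, stringSeries_ofReal, Complex.ofReal_sub, Complex.ofReal_mul]

lemma differentiable_stringDet (hr₁ : ContinuousOn r₁ (Icc a b)) (hr₂ : ContinuousOn r₂ (Icc a b))
    (hx₁ : x₁ ∈ Icc a b) (hx₂ : x₂ ∈ Icc a b) :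
    Differentiable ℂ fun z : ℂ => stringDet r₁ r₂ b x₁ x₂ z :=
  ((differentiable_stringSeries hr₁ 1 0 hx₁).mul (differentiable_stringSeries hr₂ 0 1 hx₂)).sub
    ((differentiable_stringSeries hr₂ 1 0 hx₂).mul (differentiable_stringSeries hr₁ 0 1 hx₁))

lemma exists_norm_stringDet_sq_le (hr₁ : ContinuousOn r₁ (Icc a b))
    (hr₂ : ContinuousOn r₂ (Icc a b)) (hx₁ : x₁ ∈ Icc a b) (hx₂ : x₂ ∈ Icc a b) :
    ∃ A B : ℝ, ∀ l : ℂ, ‖stringDet r₁ r₂ b x₁ x₂ (l ^ 2)‖ ≤ A * Real.exp (B * ‖l‖) := by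
  obtain ⟨A₁, B₁, hA₁, hB₁, hθ₁⟩ := exists_norm_stringSeries_sq_le hr₁ 1 0
  obtain ⟨A₂, B₂, hA₂, hB₂, hθ₂⟩ := exists_norm_stringSeries_sq_le hr₂ 1 0
  obtain ⟨A₃, B₃, hA₃, hB₃, hφ₁⟩ := exists_norm_stringSeries_sq_le hr₁ 0 1
  obtain ⟨A₄, B₄, hA₄, hB₄, hφ₂⟩ := exists_norm_stringSeries_sq_le hr₂ 0 1
  refine ⟨A₁ * A₄ + A₂ * A₃, (B₁ + B₄) + (B₂ + B₃), fun l => ?_⟩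
  calc ‖stringDet r₁ r₂ b x₁ x₂ (l ^ 2)‖
      ≤ A₁ * Real.exp (B₁ * ‖l‖) * (A₄ * Real.exp (B₄ * ‖l‖)) +
          A₂ * Real.exp (B₂ * ‖l‖) * (A₃ * Real.exp (B₃ * ‖l‖)) := by
        refine (norm_sub_le _ _).trans ?_
        rw [norm_mul, norm_mul]
        gcongr
        exacts [hθ₁ x₁ hx₁ l, hφ₂ x₂ hx₂ l, hθ₂ x₂ hx₂ l, hφ₁ x₁ hx₁ l]
    _ = A₁ * A₄ * Real.exp ((B₁ + B₄) * ‖l‖) + A₂ * A₃ * Real.exp ((B₂ + B₃) * ‖l‖) := by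
        simp only [add_mul, Real.exp_add]
        ring
    _ ≤ (A₁ * A₄ + A₂ * A₃) * Real.exp (((B₁ + B₄) + (B₂ + B₃)) * ‖l‖) := by
        rw [add_mul (A₁ * A₄)]
        refine add_le_add (mul_le_mul_of_nonneg_left ?_ (by positivity))
          (mul_le_mul_of_nonneg_left ?_ (by positivity)) <;>
        exact Real.exp_le_exp.2 (mul_le_mul_of_nonneg_right (by linarith) (norm_nonneg l))

lemma stringDet_eq_zero_of_frequently (hr₁ : ContinuousOn r₁ (Icc a b))
    (hr₂ : ContinuousOn r₂ (Icc a b)) (hx₁ : x₁ ∈ Icc a b) (hx₂ : x₂ ∈ Icc a b) {z₀ : ℝ}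
    (h : ∃ᶠ z in 𝓝[≠] z₀, stringDet r₁ r₂ b x₁ x₂ z = 0) (z : ℝ) :
    stringDet r₁ r₂ b x₁ x₂ z = 0 := by
  have hentire : AnalyticOnNhd ℂ (fun z : ℂ => stringDet r₁ r₂ b x₁ x₂ z) univ :=
    fun w _ => (differentiable_stringDet hr₁ hr₂ hx₁ hx₂).analyticAt w
  have hcoe : Tendsto ((↑) : ℝ → ℂ) (𝓝[≠] z₀) (𝓝[≠] (z₀ : ℂ)) :=
    Complex.continuous_ofReal.continuousWithinAt.tendsto_nhdsWithin
      fun z hz => Complex.ofReal_injective.ne hz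
  have hzero := hentire.eqOn_zero_of_preconnected_of_frequently_eq_zero isPreconnected_univ
    (mem_univ _) (hcoe.frequently <| h.mono fun z hz => by
      rw [stringDet_ofReal, hz, Complex.ofReal_zero])
  exact Complex.ofReal_eq_zero.1 ((stringDet_ofReal z).symm.trans (hzero (mem_univ _)))

end Determinant

section PhragmenLindelof

lemma norm_le_of_norm_le_exp_of_norm_le_on_axes {G : ℂ → ℂ} (hG : Differentiable ℂ G) {A B C : ℝ}
    (hexp : ∀ z, ‖G z‖ ≤ A * Real.exp (B * ‖z‖)) (hre : ∀ x : ℝ, ‖G x‖ ≤ C)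
    (him : ∀ x : ℝ, ‖G (x * Complex.I)‖ ≤ C) (z : ℂ) : ‖G z‖ ≤ C := by
  have hO (s : Filter ℂ) : ∃ c < (2 : ℝ), ∃ B, G =O[s] fun z => Real.exp (B * ‖z‖ ^ c) := by
    refine ⟨1, one_lt_two, B, .of_bound A (.of_forall fun z => ?_)⟩
    rw [Real.rpow_one, Real.norm_eq_abs, Real.abs_exp]
    exact hexp z
  rcases le_total 0 z.re with h | h <;> rcases le_total 0 z.im with h' | h'
  · exact PhragmenLindelof.quadrant_I hG.diffContOnCl (hO _) (fun x _ => hre x)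
      (fun x _ => him x) h h'
  · exact PhragmenLindelof.quadrant_IV hG.diffContOnCl (hO _) (fun x _ => hre x)
      (fun x _ => him x) h h'
  · exact PhragmenLindelof.quadrant_II hG.diffContOnCl (hO _) (fun x _ => hre x)
      (fun x _ => him x) h h'
  · exact PhragmenLindelof.quadrant_III hG.diffContOnCl (hO _) (fun x _ => hre x)
      (fun x _ => him x) h h'

lemma exists_norm_le_of_even_of_eventually_le {g : ℝ → ℂ} (hg : Continuous g)
    (heven : ∀ x, g (-x) = g x) {C : ℝ} (hC : ∀ᶠ x in atTop, ‖g x‖ ≤ C) :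
    ∃ C', ∀ x, ‖g x‖ ≤ C' := by
  obtain ⟨X, hX⟩ := eventually_atTop.1 hC
  obtain ⟨K, hK⟩ := isCompact_Icc.exists_bound_of_continuousOn (hg.continuousOn (s := Icc 0 X))
  have hnonneg : ∀ x, 0 ≤ x → ‖g x‖ ≤ max K C := fun x hx =>
    (le_total x X).elim (fun h => (hK x ⟨hx, h⟩).trans (le_max_left _ _))
      (fun h => (hX x h).trans (le_max_right _ _))
  refine ⟨max K C, fun x => (le_total 0 x).elim (hnonneg x) fun hx => ?_⟩
  rw [← heven]
  exact hnonneg (-x) (neg_nonneg.2 hx)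

lemma eq_zero_of_even_of_norm_le_exp {G : ℂ → ℂ} (hG : Differentiable ℂ G)
    (heven : ∀ z, G (-z) = G z) {A B C : ℝ} (hexp : ∀ z, ‖G z‖ ≤ A * Real.exp (B * ‖z‖))
    (hre : ∀ᶠ x : ℝ in atTop, ‖G x‖ ≤ C)
    (him : Tendsto (fun x : ℝ => G (x * Complex.I)) atTop (𝓝 0)) (z : ℂ) : G z = 0 := by
  obtain ⟨C₁, hC₁⟩ := exists_norm_le_of_even_of_eventually_le
    (hG.continuous.comp Complex.continuous_ofReal)
    (fun x => by simpa only [Function.comp_apply, Complex.ofReal_neg] using heven x) hre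
  obtain ⟨C₂, hC₂⟩ := exists_norm_le_of_even_of_eventually_le
    (g := fun x : ℝ => G (x * Complex.I))
    (hG.continuous.comp (Complex.continuous_ofReal.mul continuous_const))
    (fun x => by simpa only [Complex.ofReal_neg, neg_mul] using heven (x * Complex.I))
    (him.norm.eventually_le_const (norm_zero.trans_lt one_pos))
  have hbounded : Bornology.IsBounded (range G) :=
    isBounded_iff_forall_norm_le.2 ⟨max C₁ C₂, forall_mem_range.2 <|
      norm_le_of_norm_le_exp_of_norm_le_on_axes hG hexp
        (fun x => (hC₁ x).trans (le_max_left _ _)) (fun x => (hC₂ x).trans (le_max_right _ _))⟩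
  have hconst : Tendsto (fun x : ℝ => G (x * Complex.I)) atTop (𝓝 (G z)) :=
    tendsto_const_nhds.congr fun x => hG.apply_eq_apply_of_bounded hbounded _ _
  exact tendsto_nhds_unique hconst him

end PhragmenLindelof

section Speed

/-- A `C¹` positive function on `[a, b]`, serving as wave speed of an inhomogeneous medium. -/
structure IsSpeedOn (c : ℝ → ℝ) (a b : ℝ) : Prop where
  contDiffOn : ContDiffOn ℝ 1 c (Icc a b)
  pos : ∀ x ∈ Icc a b, 0 < c x

/-- The density of the string along which waves travel with speed `c`: separating variables in
`u_tt = c² u_xx` leads to the string equation with this density. -/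
noncomputable def stringDensity (c : ℝ → ℝ) (x : ℝ) : ℝ := 1 / c x ^ 2

/-- The signed time a wave of speed `c` needs to travel from `b` to `x`; negative for `x < b`. -/
noncomputable def travelTime (c : ℝ → ℝ) (b x : ℝ) : ℝ := ∫ s in b..x, 1 / c s

lemma travelTime_self (c : ℝ → ℝ) (b : ℝ) : travelTime c b b = 0 :=
  intervalIntegral.integral_same

namespace IsSpeedOn

variable {c : ℝ → ℝ} {a b x : ℝ}

lemma ne_zero (hc : IsSpeedOn c a b) : ∀ x ∈ Icc a b, c x ≠ 0 :=
  fun x hx => (hc.pos x hx).ne'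

lemma continuousOn_one_div (hc : IsSpeedOn c a b) : ContinuousOn (fun x => 1 / c x) (Icc a b) :=
  continuousOn_const.div hc.contDiffOn.continuousOn hc.ne_zero

lemma continuousOn_stringDensity (hc : IsSpeedOn c a b) :
    ContinuousOn (stringDensity c) (Icc a b) :=
  continuousOn_const.div (hc.contDiffOn.continuousOn.pow 2) fun x hx =>
    pow_ne_zero 2 (hc.ne_zero x hx)

lemma stringDensity_pos (hc : IsSpeedOn c a b) (hx : x ∈ Icc a b) : 0 < stringDensity c x :=
  one_div_pos.2 (pow_pos (hc.pos x hx) 2)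

lemma sq_mul_stringDensity_nonneg (hc : IsSpeedOn c a b) (l : ℝ) :
    ∀ x ∈ Ioo a b, 0 ≤ l ^ 2 * stringDensity c x := fun _ hx =>
  mul_nonneg (sq_nonneg l) (hc.stringDensity_pos (Ioo_subset_Icc_self hx)).le

lemma hasDerivAt (hc : IsSpeedOn c a b) (hx : x ∈ Ioo a b) : HasDerivAt c (deriv c x) x :=
  ((hc.contDiffOn.differentiableOn one_ne_zero).differentiableAt
    (Icc_mem_nhds hx.1 hx.2)).hasDerivAt

lemma hasDerivAt_one_div (hc : IsSpeedOn c a b) (hx : x ∈ Ioo a b) :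
    HasDerivAt (fun x => 1 / c x) (-deriv c x / c x ^ 2) x := by
  simpa only [one_div] using! (hc.hasDerivAt hx).inv (hc.ne_zero x (Ioo_subset_Icc_self hx))

lemma hasDerivAt_stringDensity (hc : IsSpeedOn c a b) (hx : x ∈ Ioo a b) :
    HasDerivAt (stringDensity c) (-2 * (deriv c x / c x) * stringDensity c x) x := by
  have hcx := hc.ne_zero x (Ioo_subset_Icc_self hx)
  have hsq : stringDensity c = fun x => (1 / c x) ^ 2 := funext fun x => (one_div_pow (c x) 2).symm
  rw [hsq]
  refine ((hc.hasDerivAt_one_div hx).pow 2).congr_deriv ?_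
  norm_num
  field_simp

lemma continuousOn_travelTime (hc : IsSpeedOn c a b) : ContinuousOn (travelTime c b) (Icc a b) :=
  continuousOn_integral_right hc.continuousOn_one_div

lemma hasDerivAt_travelTime (hc : IsSpeedOn c a b) (hx : x ∈ Ioo a b) :
    HasDerivAt (travelTime c b) (1 / c x) x :=
  hasDerivAt_integral_right hc.continuousOn_one_div hx

lemma monotoneOn_travelTime (hc : IsSpeedOn c a b) : MonotoneOn (travelTime c b) (Icc a b) :=
  monotoneOn_Icc_of_hasDerivAt_nonneg hc.continuousOn_travelTime
    (fun _ hx => hc.hasDerivAt_travelTime hx)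
    fun x hx => (one_div_pos.2 (hc.pos x (Ioo_subset_Icc_self hx))).le

lemma exists_le (hc : IsSpeedOn c a b) : ∃ M > 0, ∀ x ∈ Icc a b, c x ≤ M := by
  obtain ⟨M, hM⟩ := isCompact_Icc.exists_bound_of_continuousOn hc.contDiffOn.continuousOn
  exact ⟨max M 1, by positivity, fun x hx =>
    (le_abs_self _).trans ((hM x hx).trans (le_max_left _ _))⟩

lemma exists_abs_logDeriv_le (hc : IsSpeedOn c a b) :
    ∃ L ≥ 0, ∀ x ∈ Ioo a b, |deriv c x / c x| ≤ L := by
  rcases le_or_gt b a with hab | hab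
  · exact ⟨0, le_rfl, fun x hx => absurd (hx.1.trans hx.2) hab.not_gt⟩
  obtain ⟨L, hL⟩ := isCompact_Icc.exists_bound_of_continuousOn
    ((hc.contDiffOn.continuousOn_derivWithin (uniqueDiffOn_Icc hab) le_rfl).div
      hc.contDiffOn.continuousOn hc.ne_zero)
  refine ⟨max L 0, le_max_right _ _, fun x hx => ?_⟩
  rw [← derivWithin_of_mem_nhds (Icc_mem_nhds hx.1 hx.2)]
  exact (hL x (Ioo_subset_Icc_self hx)).trans (le_max_left _ _)

end IsSpeedOn

end Speed

lemma sq_le_add_mul_sq {p q σ : ℝ} (hσ : σ ^ 2 = 1) (h : 0 ≤ σ * (q * p)) :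
    q ^ 2 ≤ (p + σ * q) ^ 2 := by
  calc q ^ 2 ≤ p ^ 2 + σ ^ 2 * q ^ 2 + 2 * (σ * (q * p)) := by
        rw [hσ]
        linarith [sq_nonneg p]
    _ = (p + σ * q) ^ 2 := by ring

namespace IsStringSolution

variable {c : ℝ → ℝ} {a b l σ τ L M x : ℝ} {y y' : ℝ → ℝ}

lemma energy_le (hc : IsSpeedOn c a b)
    (hL : ∀ x ∈ Ioo a b, |deriv c x / c x| ≤ L)
    (hy : IsStringSolution (stringDensity c) a b (-τ ^ 2) y y') (hx : x ∈ Icc a b) :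
    y' x ^ 2 + τ ^ 2 * (stringDensity c x * y x ^ 2) ≤
      (y' b ^ 2 + τ ^ 2 * (stringDensity c b * y b ^ 2)) *
        Real.exp (-2 * L * x - -2 * L * b) := by
  refine le_mul_exp_of_mul_le_deriv
    (F := fun x => y' x ^ 2 + τ ^ 2 * (stringDensity c x * y x ^ 2)) (κ := fun x => -2 * L * x)
    ((hy.continuousOn_deriv.pow 2).add
      ((hc.continuousOn_stringDensity.mul (hy.continuousOn.pow 2)).const_mul _))
    (continuousOn_const.mul continuousOn_id)
    (fun t ht => ((hy.hasDerivAt_deriv t ht).pow 2).add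
      (((hc.hasDerivAt_stringDensity ht).mul ((hy.hasDerivAt t ht).pow 2)).const_mul (τ ^ 2)))
    (fun t _ => (hasDerivAt_id t).const_mul (-2 * L)) (fun t ht => ?_) hx
  have hr := hc.stringDensity_pos (Ioo_subset_Icc_self ht)
  have hLt := abs_le.1 (hL t ht)
  have hloss : deriv c t / c t * (τ ^ 2 * (stringDensity c t * y t ^ 2)) ≤
      L * (τ ^ 2 * (stringDensity c t * y t ^ 2)) := by
    gcongr
    exact hLt.2
  have hkin : 0 ≤ L * y' t ^ 2 := mul_nonneg ((abs_nonneg _).trans (hL t ht)) (sq_nonneg _)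
  norm_num
  linarith

lemma exists_mul_abs_le_of_neg (hc : IsSpeedOn c a b) :
    ∃ C ≥ 0, ∀ τ > 0, ∀ y y', IsStringSolution (stringDensity c) a b (-τ ^ 2) y y' →
      ∀ x ∈ Icc a b, τ * |y x| ≤ C * (|y' b| + τ * |y b|) := by
  obtain ⟨L, hL0, hL⟩ := hc.exists_abs_logDeriv_le
  obtain ⟨M, hM0, hM⟩ := hc.exists_le
  refine ⟨M * ((1 + |1 / c b|) * Real.exp (L * (b - a))), by positivity,
    fun τ hτ y y' hy x hx => ?_⟩
  have hF0 : y' b ^ 2 + τ ^ 2 * (stringDensity c b * y b ^ 2) ≤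
      ((1 + |1 / c b|) * (|y' b| + τ * |y b|)) ^ 2 := by
    have hτy : 0 ≤ τ * |y b| := by positivity
    calc y' b ^ 2 + τ ^ 2 * (stringDensity c b * y b ^ 2)
        = |y' b| ^ 2 + (|1 / c b| * (τ * |y b|)) ^ 2 := by
          rw [sq_abs, mul_pow, mul_pow, sq_abs, sq_abs, one_div_pow, stringDensity]
          ring
      _ ≤ (|y' b| + |1 / c b| * (τ * |y b|)) ^ 2 := by
          nlinarith [mul_nonneg (abs_nonneg (y' b)) (mul_nonneg (abs_nonneg (1 / c b)) hτy)]
      _ ≤ _ := by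
          gcongr
          nlinarith [mul_nonneg (abs_nonneg (1 / c b)) (abs_nonneg (y' b))]
  have hexp : Real.exp (-2 * L * x - -2 * L * b) ≤ Real.exp (L * (b - a)) ^ 2 := by
    rw [← Real.exp_nat_mul, Real.exp_le_exp]
    push_cast
    nlinarith [hx.1]
  have hcx := hc.pos x hx
  have hxF : (τ * (|y x| / c x)) ^ 2 ≤
      ((1 + |1 / c b|) * (|y' b| + τ * |y b|) * Real.exp (L * (b - a))) ^ 2 := by
    calc (τ * (|y x| / c x)) ^ 2 = τ ^ 2 * (stringDensity c x * y x ^ 2) := by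
          rw [mul_pow, div_pow, sq_abs, stringDensity]
          ring
      _ ≤ y' x ^ 2 + τ ^ 2 * (stringDensity c x * y x ^ 2) := le_add_of_nonneg_left (sq_nonneg _)
      _ ≤ _ := hy.energy_le hc hL hx
      _ ≤ ((1 + |1 / c b|) * (|y' b| + τ * |y b|)) ^ 2 * Real.exp (L * (b - a)) ^ 2 := by gcongr
      _ = _ := (mul_pow _ _ 2).symm
  calc τ * |y x| = c x * (τ * (|y x| / c x)) := by field_simp
    _ ≤ M * ((1 + |1 / c b|) * (|y' b| + τ * |y b|) * Real.exp (L * (b - a))) :=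
        mul_le_mul (hM x hx) (le_of_sq_le_sq hxF (by positivity)) (by positivity) hM0.le
    _ = _ := by ring

lemma sq_le_sq_deriv_add (hl : 0 ≤ l) (hσ : σ ^ 2 = 1) (hcx : 0 ≤ c x)
    (hσy : 0 ≤ σ * (y x * y' x)) :
    (l * y x * (1 / c x)) ^ 2 ≤ (y' x + σ * (l * y x * (1 / c x))) ^ 2 := by
  refine sq_le_add_mul_sq hσ ?_
  calc 0 ≤ l * (1 / c x) * (σ * (y x * y' x)) := by positivity
    _ = σ * (l * y x * (1 / c x) * y' x) := by ring

/- `S = y' + σ l y / c` satisfies `S' = (σ l / c) S - (c' / c) (σ l y / c)`, whose last term is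
dominated by `S`. -/
lemma sq_add_le_mul_exp (hc : IsSpeedOn c a b) (hL : ∀ x ∈ Ioo a b, |deriv c x / c x| ≤ L)
    (hl : 0 ≤ l) (hσ : σ ^ 2 = 1)
    (hy : IsStringSolution (stringDensity c) a b (l ^ 2) y y')
    (hσy : ∀ x ∈ Icc a b, 0 ≤ σ * (y x * y' x)) (hx : x ∈ Icc a b) :
    (y' x + σ * (l * y x * (1 / c x))) ^ 2 ≤ (y' b + σ * (l * y b * (1 / c b))) ^ 2 *
      Real.exp ((2 * σ * l * travelTime c b x - 2 * L * x) -
        (2 * σ * l * travelTime c b b - 2 * L * b)) := by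
  refine le_mul_exp_of_mul_le_deriv (F := fun x => (y' x + σ * (l * y x * (1 / c x))) ^ 2)
    (κ := fun x => 2 * σ * l * travelTime c b x - 2 * L * x)
    ((hy.continuousOn_deriv.add
      (((hy.continuousOn.const_mul l).mul hc.continuousOn_one_div).const_mul σ)).pow 2)
    ((hc.continuousOn_travelTime.const_mul _).sub (continuousOn_const.mul continuousOn_id))
    (fun t ht => ((hy.hasDerivAt_deriv t ht).add
      ((((hy.hasDerivAt t ht).const_mul l).mul (hc.hasDerivAt_one_div ht)).const_mul σ)).pow 2)
    (fun t ht => ((hc.hasDerivAt_travelTime ht).const_mul _).sub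
      ((hasDerivAt_id t).const_mul (2 * L))) (fun t ht => ?_) hx
  have ht' := Ioo_subset_Icc_self ht
  have hct := hc.pos t ht'
  set R := l * y t * (1 / c t) with hR
  set S := y' t + σ * R with hS
  have hRS : |σ * R * S| ≤ S ^ 2 := by
    have hσ1 : |σ| = 1 := by rw [← abs_one, ← sq_eq_sq_iff_abs_eq_abs, hσ, one_pow]
    rw [abs_mul, abs_mul, hσ1, one_mul, ← sq_abs S, sq]
    exact mul_le_mul_of_nonneg_right (sq_le_sq.1 (sq_le_sq_deriv_add hl hσ hct.le (hσy t ht')))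
      (abs_nonneg S)
  have hdamp : deriv c t / c t * (σ * R * S) ≤ L * S ^ 2 :=
    (le_abs_self _).trans <| by
      rw [abs_mul]
      exact mul_le_mul (hL t ht) hRS (abs_nonneg _) ((abs_nonneg _).trans (hL t ht))
  have hderiv : l ^ 2 * stringDensity c t * y t +
      σ * (l * y' t * (1 / c t) + l * y t * (-deriv c t / c t ^ 2)) =
        σ * l * (1 / c t) * S - deriv c t / c t * (σ * R) := by
    rw [hS, hR, stringDensity]
    linear_combination (-(l ^ 2 * y t / c t ^ 2)) * hσ
  calc (2 * σ * l * (1 / c t) - 2 * L * 1) * S ^ 2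
      ≤ 2 * S * (σ * l * (1 / c t) * S - deriv c t / c t * (σ * R)) := by linarith
    _ = _ := by
        rw [← hderiv, hS, hR]
        norm_num

lemma exists_mul_abs_le_mul_exp (hc : IsSpeedOn c a b) :
    ∃ C ≥ 0, ∀ l ≥ 0, ∀ σ, σ ^ 2 = 1 → ∀ y y', IsStringSolution (stringDensity c) a b (l ^ 2) y y' →
      (∀ x ∈ Icc a b, 0 ≤ σ * (y x * y' x)) → ∀ x ∈ Icc a b,
        l * |y x| ≤ C * |y' b + σ * (l * y b * (1 / c b))| *
          Real.exp (σ * l * travelTime c b x) := by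
  obtain ⟨L, hL0, hL⟩ := hc.exists_abs_logDeriv_le
  obtain ⟨M, hM0, hM⟩ := hc.exists_le
  refine ⟨M * Real.exp (L * (b - a)), by positivity, fun l hl σ hσ y y' hy hσy x hx => ?_⟩
  have hcx := hc.pos x hx
  have hexp : Real.exp ((2 * σ * l * travelTime c b x - 2 * L * x) -
      (2 * σ * l * travelTime c b b - 2 * L * b)) ≤
        (Real.exp (L * (b - a)) * Real.exp (σ * l * travelTime c b x)) ^ 2 := by
    rw [← Real.exp_add, ← Real.exp_nat_mul, Real.exp_le_exp, travelTime_self]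
    push_cast
    nlinarith [hx.1]
  have hsq : (l * |y x| * (1 / c x)) ^ 2 ≤ (|y' b + σ * (l * y b * (1 / c b))| *
      (Real.exp (L * (b - a)) * Real.exp (σ * l * travelTime c b x))) ^ 2 := by
    calc (l * |y x| * (1 / c x)) ^ 2 = (l * y x * (1 / c x)) ^ 2 := by
          simp only [mul_pow, sq_abs]
      _ ≤ _ := sq_le_sq_deriv_add hl hσ hcx.le (hσy x hx)
      _ ≤ _ := hy.sq_add_le_mul_exp hc hL hl hσ hσy hx
      _ ≤ _ := mul_le_mul_of_nonneg_left hexp (sq_nonneg _)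
      _ = _ := by rw [mul_pow |_|, sq_abs]
  calc l * |y x| = c x * (l * |y x| * (1 / c x)) := by field_simp
    _ ≤ M * (|y' b + σ * (l * y b * (1 / c b))| *
          (Real.exp (L * (b - a)) * Real.exp (σ * l * travelTime c b x))) :=
        mul_le_mul (hM x hx) (le_of_sq_le_sq hsq (by positivity)) (by positivity) hM0.le
    _ = _ := by ring

lemma exists_mul_abs_le_mul_exp_neg (hc : IsSpeedOn c a b) :
    ∃ C ≥ 0, ∀ l ≥ 0, ∀ φ φ', IsStringSolution (stringDensity c) a b (l ^ 2) φ φ' →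
      φ b = 0 → φ' b = 1 → ∀ x ∈ Icc a b,
        l * |φ x| ≤ C * Real.exp (-(l * travelTime c b x)) := by
  obtain ⟨C, hC0, hC⟩ := exists_mul_abs_le_mul_exp hc
  refine ⟨C, hC0, fun l hl φ φ' hφ hφb hφb' x hx => ?_⟩
  have h := hC l hl (-1) (by norm_num) φ φ' hφ (fun t ht => by
    linarith [hφ.mul_deriv_nonpos (hc.sq_mul_stringDensity_nonneg l) hφb ht]) x hx
  simpa [hφb, hφb'] using h

lemma exists_abs_le_mul_exp (hc : IsSpeedOn c a b) (hab : a < b) :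
    ∃ C, ∀ l ≥ 1, ∀ ψ ψ', IsStringSolution (stringDensity c) a b (l ^ 2) ψ ψ' →
      ψ a = 0 → ψ b = 1 → ∀ x ∈ Icc a b, |ψ x| ≤ C * l * Real.exp (l * travelTime c b x) := by
  obtain ⟨C, hC0, hC⟩ := exists_mul_abs_le_mul_exp hc
  obtain ⟨R, hR⟩ := isCompact_Icc.exists_bound_of_continuousOn hc.continuousOn_stringDensity
  have hcb := hc.pos b (right_mem_Icc.2 hab.le)
  have : 0 < b - a := sub_pos.2 hab
  set K := 1 / (b - a) + R * (b - a) + 1 / c b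
  refine ⟨C * K, fun l hl ψ ψ' hψ hψa hψb x hx => ?_⟩
  have hl0 : 0 < l := one_pos.trans_le hl
  have hzr := hc.sq_mul_stringDensity_nonneg l
  have hψψ' : ∀ t ∈ Icc a b, 0 ≤ ψ t * ψ' t := fun t ht => hψ.mul_deriv_nonneg hzr hψa ht
  have hslope0 : 0 ≤ ψ' b := by simpa [hψb] using hψψ' b (right_mem_Icc.2 hab.le)
  have hslope : ψ' b ≤ 1 / (b - a) + l ^ 2 * R * (b - a) := by
    simpa [hψb] using hψ.deriv_right_le hzr hab hψa (by simp [hψb]) (Z := l ^ 2 * R) fun t ht => by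
      gcongr
      exact (le_abs_self _).trans (hR t (Ioo_subset_Icc_self ht))
  have hdata : |ψ' b + 1 * (l * ψ b * (1 / c b))| ≤ K * l ^ 2 := by
    rw [hψb, one_mul, mul_one, abs_of_nonneg (by positivity)]
    calc ψ' b + l * (1 / c b)
        ≤ 1 / (b - a) * l ^ 2 + l ^ 2 * R * (b - a) + l ^ 2 * (1 / c b) := by
          gcongr
          · exact hslope.trans <| add_le_add_left
              (le_mul_of_one_le_right (by positivity) (one_le_pow₀ hl)) _
          · exact le_self_pow₀ hl two_ne_zero
      _ = K * l ^ 2 := by ring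
  have h := hC l hl0.le 1 (one_pow 2) ψ ψ' hψ (by simpa only [one_mul] using hψψ') x hx
  rw [one_mul l] at h
  refine le_of_mul_le_mul_left (h.trans ?_) hl0
  calc C * |ψ' b + 1 * (l * ψ b * (1 / c b))| * Real.exp (l * travelTime c b x)
      ≤ C * (K * l ^ 2) * Real.exp (l * travelTime c b x) := by gcongr
    _ = _ := by ring

end IsStringSolution

section BorgMarchenko

variable {c₁ c₂ : ℝ → ℝ} {a b x₁ x₂ : ℝ}

lemma IsSpeedOn.exists_abs_mul_le (h₁ : IsSpeedOn c₁ a b) (h₂ : IsSpeedOn c₂ a b) (hab : a < b)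
    (hx₁ : x₁ ∈ Icc a b) (hx₂ : x₂ ∈ Icc a b) (hT : travelTime c₁ b x₁ = travelTime c₂ b x₂) :
    ∃ C, ∀ l ≥ 1, ∀ φ φ' ψ ψ', IsStringSolution (stringDensity c₁) a b (l ^ 2) φ φ' →
      φ b = 0 → φ' b = 1 → IsStringSolution (stringDensity c₂) a b (l ^ 2) ψ ψ' →
        ψ a = 0 → ψ b = 1 → |φ x₁ * ψ x₂| ≤ C := by
  obtain ⟨C₁, hC₁, hdecay⟩ := IsStringSolution.exists_mul_abs_le_mul_exp_neg h₁
  obtain ⟨C₂, hgrowth⟩ := IsStringSolution.exists_abs_le_mul_exp h₂ hab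
  refine ⟨C₁ * C₂, fun l hl φ φ' ψ ψ' hφ hφb hφb' hψ hψa hψb => ?_⟩
  have hl0 : 0 < l := one_pos.trans_le hl
  refine le_of_mul_le_mul_left ?_ hl0
  calc l * |φ x₁ * ψ x₂| = l * |φ x₁| * |ψ x₂| := by rw [abs_mul, mul_assoc]
    _ ≤ C₁ * Real.exp (-(l * travelTime c₁ b x₁)) *
          (C₂ * l * Real.exp (l * travelTime c₂ b x₂)) :=
        mul_le_mul (hdecay l hl0.le φ φ' hφ hφb hφb' x₁ hx₁)
          (hgrowth l hl ψ ψ' hψ hψa hψb x₂ hx₂) (abs_nonneg _) (by positivity)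
    _ = l * (C₁ * C₂) * (Real.exp (-(l * travelTime c₂ b x₂)) *
          Real.exp (l * travelTime c₂ b x₂)) := by
        rw [hT]
        ring
    _ = l * (C₁ * C₂) := by rw [← Real.exp_add, neg_add_cancel, Real.exp_zero, mul_one]

lemma IsSpeedOn.exists_add_mul_eq_zero (hc : IsSpeedOn c₁ a b) (hab : a < b) {r : ℝ → ℝ} {l : ℝ}
    (hdet : stringDet (stringDensity c₁) r b a a (l ^ 2) = 0) :
    ∃ μ, stringSeries (stringDensity c₁) b 1 0 (l ^ 2) a +
        μ * stringSeries (stringDensity c₁) b 0 1 (l ^ 2) a = 0 ∧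
      stringSeries r b 1 0 (l ^ 2) a + μ * stringSeries r b 0 1 (l ^ 2) a = 0 := by
  have hne : stringSeries (stringDensity c₁) b 0 1 (l ^ 2) a ≠ 0 :=
    (isStringSolution_stringSeries hc.continuousOn_stringDensity 0 1 (l ^ 2)).left_ne_zero
      (hc.sq_mul_stringDensity_nonneg l) hab (stringSeries_right 0 1 _)
      ((stringSeriesDeriv_right 0 1 _).trans_ne one_ne_zero)
  refine ⟨-stringSeries (stringDensity c₁) b 1 0 (l ^ 2) a /
    stringSeries (stringDensity c₁) b 0 1 (l ^ 2) a, ?_, ?_⟩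
  · rw [div_mul_cancel₀ _ hne, add_neg_cancel]
  · rw [div_mul_eq_mul_div, add_eq_zero_iff_eq_neg, ← neg_div, eq_div_iff hne]
    rw [stringDet] at hdet
    linarith

/- Adding a multiple of `φᵢ` to `θᵢ` leaves the determinant unchanged, and pairs the decaying `φᵢ`
with solutions growing at the same rate. -/
lemma exists_abs_stringDet_sq_le (h₁ : IsSpeedOn c₁ a b) (h₂ : IsSpeedOn c₂ a b) (hab : a < b)
    (hdet : ∀ l : ℝ, stringDet (stringDensity c₁) (stringDensity c₂) b a a (l ^ 2) = 0)
    (hx₁ : x₁ ∈ Icc a b) (hx₂ : x₂ ∈ Icc a b) (hT : travelTime c₁ b x₁ = travelTime c₂ b x₂) :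
    ∃ C, ∀ l : ℝ, 1 ≤ l →
      |stringDet (stringDensity c₁) (stringDensity c₂) b x₁ x₂ (l ^ 2)| ≤ C := by
  obtain ⟨C₁, hC₁⟩ := h₁.exists_abs_mul_le h₂ hab hx₁ hx₂ hT
  obtain ⟨C₂, hC₂⟩ := h₂.exists_abs_mul_le h₁ hab hx₂ hx₁ hT.symm
  refine ⟨C₁ + C₂, fun l hl => ?_⟩
  obtain ⟨μ, hμ₁, hμ₂⟩ := h₁.exists_add_mul_eq_zero hab (hdet l)
  have hθ₁ := isStringSolution_stringSeries h₁.continuousOn_stringDensity 1 0 (l ^ 2)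
  have hφ₁ := isStringSolution_stringSeries h₁.continuousOn_stringDensity 0 1 (l ^ 2)
  have hθ₂ := isStringSolution_stringSeries h₂.continuousOn_stringDensity 1 0 (l ^ 2)
  have hφ₂ := isStringSolution_stringSeries h₂.continuousOn_stringDensity 0 1 (l ^ 2)
  have hright (r : ℝ → ℝ) :
      stringSeries r b 1 0 (l ^ 2) b + μ * stringSeries r b 0 1 (l ^ 2) b = 1 := by
    simp [stringSeries_right]
  have hφψ := hC₁ l hl _ _ _ _ hφ₁ (stringSeries_right 0 1 _) (stringSeriesDeriv_right 0 1 _)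
    (hθ₂.add_const_mul hφ₂ μ) hμ₂ (hright _)
  have hψφ := hC₂ l hl _ _ _ _ hφ₂ (stringSeries_right 0 1 _) (stringSeriesDeriv_right 0 1 _)
    (hθ₁.add_const_mul hφ₁ μ) hμ₁ (hright _)
  refine (le_of_eq ?_).trans ((abs_sub _ _).trans ((add_le_add hψφ hφψ).trans_eq (add_comm _ _)))
  rw [stringDet]
  ring_nf

lemma IsSpeedOn.exists_abs_stringSeries_neg_sq_le (hc : IsSpeedOn c₁ a b) :
    ∃ C ≥ 0, ∀ τ : ℝ, 0 < τ → ∀ x ∈ Icc a b,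
      |stringSeries (stringDensity c₁) b 1 0 (-τ ^ 2) x| ≤ C ∧
        |stringSeries (stringDensity c₁) b 0 1 (-τ ^ 2) x| ≤ C / τ := by
  obtain ⟨C, hC0, hC⟩ := IsStringSolution.exists_mul_abs_le_of_neg hc
  refine ⟨C, hC0, fun τ hτ x hx => ?_⟩
  have hθ := hC τ hτ _ _
    (isStringSolution_stringSeries hc.continuousOn_stringDensity 1 0 (-τ ^ 2)) x hx
  have hφ := hC τ hτ _ _
    (isStringSolution_stringSeries hc.continuousOn_stringDensity 0 1 (-τ ^ 2)) x hx
  simp only [stringSeries_right, stringSeriesDeriv_right, RCLike.ofReal_real_eq_id, id_eq,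
    abs_zero, abs_one, zero_add, add_zero, mul_zero, mul_one] at hθ hφ
  exact ⟨le_of_mul_le_mul_left (hθ.trans_eq (mul_comm C τ)) hτ, (le_div_iff₀' hτ).2 hφ⟩

lemma exists_abs_stringDet_neg_sq_le (h₁ : IsSpeedOn c₁ a b) (h₂ : IsSpeedOn c₂ a b)
    (hx₁ : x₁ ∈ Icc a b) (hx₂ : x₂ ∈ Icc a b) :
    ∃ C, ∀ τ : ℝ, 0 < τ →
      |stringDet (stringDensity c₁) (stringDensity c₂) b x₁ x₂ (-τ ^ 2)| ≤ C / τ := by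
  obtain ⟨C₁, hC₁0, hC₁⟩ := h₁.exists_abs_stringSeries_neg_sq_le
  obtain ⟨C₂, hC₂0, hC₂⟩ := h₂.exists_abs_stringSeries_neg_sq_le
  refine ⟨2 * (C₁ * C₂), fun τ hτ => (abs_sub _ _).trans ?_⟩
  obtain ⟨hθ₁, hφ₁⟩ := hC₁ τ hτ x₁ hx₁
  obtain ⟨hθ₂, hφ₂⟩ := hC₂ τ hτ x₂ hx₂
  rw [abs_mul, abs_mul]
  calc _ ≤ C₁ * (C₂ / τ) + C₂ * (C₁ / τ) := by gcongr
    _ = 2 * (C₁ * C₂) / τ := by ring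

lemma eq_of_travelTime_eq (h₁ : IsSpeedOn c₁ a b) (h₂ : IsSpeedOn c₂ a b) (hab : a < b)
    (hdet : ∀ l : ℝ, stringDet (stringDensity c₁) (stringDensity c₂) b a a (l ^ 2) = 0)
    (hx₁ : x₁ ∈ Icc a b) (hx₂ : x₂ ∈ Icc a b) (hT : travelTime c₁ b x₁ = travelTime c₂ b x₂) :
    x₁ = x₂ := by
  set G : ℂ → ℂ := fun l => stringDet (stringDensity c₁) (stringDensity c₂) b x₁ x₂ (l ^ 2) with hG
  have hr₁ := h₁.continuousOn_stringDensity
  have hr₂ := h₂.continuousOn_stringDensity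
  have hdiff : Differentiable ℂ G :=
    (differentiable_stringDet hr₁ hr₂ hx₁ hx₂).comp (differentiable_id.pow 2)
  have hnorm {w : ℂ} {z : ℝ} (hw : w ^ 2 = z) :
      ‖G w‖ = |stringDet (stringDensity c₁) (stringDensity c₂) b x₁ x₂ z| := by
    simp only [hG, hw, stringDet_ofReal, Complex.norm_real, Real.norm_eq_abs]
  obtain ⟨A, B, hexp⟩ := exists_norm_stringDet_sq_le hr₁ hr₂ hx₁ hx₂
  obtain ⟨C, hC⟩ := exists_abs_stringDet_sq_le h₁ h₂ hab hdet hx₁ hx₂ hT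
  obtain ⟨C', hC'⟩ := exists_abs_stringDet_neg_sq_le h₁ h₂ hx₁ hx₂
  have hre : ∀ᶠ x : ℝ in atTop, ‖G x‖ ≤ C := by
    filter_upwards [eventually_ge_atTop 1] with l hl
    exact (hnorm (Complex.ofReal_pow l 2).symm).trans_le (hC l hl)
  have him : Tendsto (fun x : ℝ => G (x * Complex.I)) atTop (𝓝 0) := by
    refine squeeze_zero_norm' ?_ (tendsto_const_nhds.div_atTop tendsto_id : Tendsto
      (fun τ : ℝ => C' / τ) atTop (𝓝 0))
    filter_upwards [eventually_gt_atTop 0] with τ hτ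
    refine (hnorm (z := -τ ^ 2) ?_).trans_le (hC' τ hτ)
    rw [mul_pow, Complex.I_sq, mul_neg_one, Complex.ofReal_neg, Complex.ofReal_pow]
  have hG0 : G 0 = 0 :=
    eq_zero_of_even_of_norm_le_exp hdiff (fun z => by simp only [hG, neg_sq]) hexp hre him 0
  simp only [hG, zero_pow two_ne_zero, stringDet_zero] at hG0
  exact (sub_eq_zero.1 (Complex.ofReal_eq_zero.1 hG0)).symm

lemma travelTime_eqOn_of_forall_eq (h₁ : IsSpeedOn c₁ a b) (h₂ : IsSpeedOn c₂ a b)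
    (hinj : ∀ x₁ ∈ Icc a b, ∀ x₂ ∈ Icc a b,
      travelTime c₁ b x₁ = travelTime c₂ b x₂ → x₁ = x₂)
    (hle : travelTime c₂ b a ≤ travelTime c₁ b a) :
    EqOn (travelTime c₁ b) (travelTime c₂ b) (Icc a b) := by
  intro x hx
  have hab := hx.1.trans hx.2
  have hlower := hle.trans (h₁.monotoneOn_travelTime (left_mem_Icc.2 hab) hx hx.1)
  have hupper := h₁.monotoneOn_travelTime hx (right_mem_Icc.2 hab) hx.2
  rw [travelTime_self, ← travelTime_self c₂ b] at hupper
  obtain ⟨x₂, hx₂, heq⟩ :=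
    intermediate_value_Icc hab h₂.continuousOn_travelTime ⟨hlower, hupper⟩
  rw [← heq, hinj x hx x₂ hx₂ heq.symm]

lemma IsSpeedOn.eqOn_of_travelTime_eqOn (h₁ : IsSpeedOn c₁ a b) (h₂ : IsSpeedOn c₂ a b)
    (hab : a < b) (hT : EqOn (travelTime c₁ b) (travelTime c₂ b) (Icc a b)) :
    EqOn c₁ c₂ (Icc a b) := by
  refine Set.EqOn.of_subset_closure (s := Ioo a b) (fun x hx => ?_) h₁.contDiffOn.continuousOn
    h₂.contDiffOn.continuousOn Ioo_subset_Icc_self (closure_Ioo hab.ne).ge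
  have hderiv := (h₁.hasDerivAt_travelTime hx).unique <|
    (h₂.hasDerivAt_travelTime hx).congr_of_eventuallyEq <|
      eventually_of_mem (Icc_mem_nhds hx.1 hx.2) hT
  rwa [one_div, one_div, inv_inj] at hderiv

theorem IsSpeedOn.eqOn_of_stringDet_eq_zero (h₁ : IsSpeedOn c₁ a b) (h₂ : IsSpeedOn c₂ a b)
    (hab : a < b)
    (hdet : ∀ l : ℝ, stringDet (stringDensity c₁) (stringDensity c₂) b a a (l ^ 2) = 0) :
    EqOn c₁ c₂ (Icc a b) := by
  refine h₁.eqOn_of_travelTime_eqOn h₂ hab ?_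
  have hinj : ∀ x₁ ∈ Icc a b, ∀ x₂ ∈ Icc a b,
      travelTime c₁ b x₁ = travelTime c₂ b x₂ → x₁ = x₂ :=
    fun x₁ hx₁ x₂ hx₂ hT => eq_of_travelTime_eq h₁ h₂ hab hdet hx₁ hx₂ hT
  rcases le_total (travelTime c₂ b a) (travelTime c₁ b a) with hle | hle
  · exact travelTime_eqOn_of_forall_eq h₁ h₂ hinj hle
  · exact (travelTime_eqOn_of_forall_eq h₂ h₁
      (fun x₁ hx₁ x₂ hx₂ hT => (hinj x₂ hx₂ x₁ hx₁ hT.symm).symm) hle).symm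

end BorgMarchenko

section CosTransform

/-- The cosine transform `τ ↦ ∫₀^∞ cos (τ t) g t dt`, which turns the wave equation into the string
equation `y'' = -τ² c⁻² y`. -/
noncomputable def cosTransform (g : ℝ → ℝ) (τ : ℝ) : ℝ :=
  ∫ t in Ioi 0, Real.cos (τ * t) * g t

/-- The component of the wave `u` of frequency `τ`: the cosine transform in time of `u`, as a
function of the space variable. -/
noncomputable def frequencyMode (u : ℝ → ℝ → ℝ) (τ x : ℝ) : ℝ :=
  cosTransform (fun t => u t x) τ

variable {g h w : ℝ → ℝ} {τ : ℝ}

lemma abs_cos_mul_le (s a : ℝ) : |Real.cos s * a| ≤ |a| := by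
  rw [abs_mul]
  exact mul_le_of_le_one_left (abs_nonneg a) (Real.abs_cos_le_one s)

lemma continuousOn_cos_mul {s : Set ℝ} (hg : ContinuousOn g s) (τ : ℝ) :
    ContinuousOn (fun t => Real.cos (τ * t) * g t) s :=
  Continuous.continuousOn (by fun_prop) |>.mul hg

lemma aestronglyMeasurable_cos_mul {μ : Measure ℝ} (hg : AEStronglyMeasurable g μ) (τ : ℝ) :
    AEStronglyMeasurable (fun t => Real.cos (τ * t) * g t) μ :=
  Continuous.aestronglyMeasurable (by fun_prop) |>.mul hg

lemma integrable_cos_mul {μ : Measure ℝ} (hg : Integrable g μ) (τ : ℝ) :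
    Integrable (fun t => Real.cos (τ * t) * g t) μ :=
  hg.mono (aestronglyMeasurable_cos_mul hg.1 τ) (ae_of_all _ fun _ => abs_cos_mul_le _ _)

lemma cosTransform_congr (hgh : EqOn g h (Ioi 0)) (τ : ℝ) :
    cosTransform g τ = cosTransform h τ :=
  setIntegral_congr_fun measurableSet_Ioi fun t ht => congrArg (Real.cos (τ * t) * ·) (hgh ht)

lemma cosTransform_zero (τ : ℝ) : cosTransform (fun _ => 0) τ = 0 := by
  simp [cosTransform]

lemma cosTransform_sub (hg : IntegrableOn g (Ioi 0)) (hh : IntegrableOn h (Ioi 0)) (τ : ℝ) :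
    cosTransform (fun t => g t - h t) τ = cosTransform g τ - cosTransform h τ := by
  simp only [cosTransform, mul_sub]
  exact integral_sub (integrable_cos_mul hg τ) (integrable_cos_mul hh τ)

lemma continuous_cosTransform (hg : IntegrableOn g (Ioi 0)) : Continuous (cosTransform g) :=
  continuous_of_dominated (fun τ => aestronglyMeasurable_cos_mul hg.1 τ)
    (fun _ => ae_of_all _ fun _ => abs_cos_mul_le _ _) hg.norm (ae_of_all _ fun _ => by fun_prop)

lemma abs_integral_sub_cosTransform_le (hg : IntegrableOn g (Ioi 0)) (hw : IntegrableOn w (Ioi 0))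
    (hgw : ∀ t ≥ 0, |g t| ≤ w t) (τ : ℝ) {T : ℝ} (hT : 0 ≤ T) :
    |(∫ t in 0..T, Real.cos (τ * t) * g t) - cosTransform g τ| ≤ ∫ t in Ioi T, w t := by
  rw [cosTransform, ← intervalIntegral.integral_Ioi_sub_Ioi (integrable_cos_mul hg τ) hT,
    sub_sub_cancel_left, abs_neg, ← Real.norm_eq_abs]
  exact norm_integral_le_of_norm_le (hw.mono_set (Ioi_subset_Ioi hT))
    (ae_restrict_of_forall_mem measurableSet_Ioi fun t ht =>
      (abs_cos_mul_le _ _).trans (hgw t (hT.trans ht.le)))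

lemma continuousOn_frequencyMode {v : ℝ → ℝ → ℝ} {s : Set ℝ}
    (hm : ∀ x ∈ s, AEStronglyMeasurable (fun t => v t x) (volume.restrict (Ioi 0)))
    (hc : ∀ t ≥ 0, ContinuousOn (v t) s) (hw : IntegrableOn w (Ioi 0))
    (hvw : ∀ t ≥ 0, ∀ x ∈ s, |v t x| ≤ w t) (τ : ℝ) :
    ContinuousOn (frequencyMode v τ) s :=
  continuousOn_of_dominated (fun x hx => aestronglyMeasurable_cos_mul (hm x hx) τ)
    (fun x hx => ae_restrict_of_forall_mem measurableSet_Ioi fun t ht =>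
      (abs_cos_mul_le _ _).trans (hvw t (mem_Ioi.1 ht).le x hx)) hw
    (ae_restrict_of_forall_mem measurableSet_Ioi fun t ht => (hc t (mem_Ioi.1 ht).le).const_mul _)

lemma hasDerivAt_frequencyMode {v v' : ℝ → ℝ → ℝ} {s : Set ℝ} {x : ℝ} (hs : s ∈ 𝓝 x)
    (hm : ∀ y ∈ s, AEStronglyMeasurable (fun t => v t y) (volume.restrict (Ioi 0)))
    (hi : IntegrableOn (fun t => v t x) (Ioi 0))
    (hm' : AEStronglyMeasurable (fun t => v' t x) (volume.restrict (Ioi 0)))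
    (hd : ∀ t ≥ 0, ∀ y ∈ s, HasDerivAt (v t) (v' t y) y) (hw : IntegrableOn w (Ioi 0))
    (hvw : ∀ t ≥ 0, ∀ y ∈ s, |v' t y| ≤ w t) (τ : ℝ) :
    HasDerivAt (frequencyMode v τ) (frequencyMode v' τ x) x :=
  (hasDerivAt_integral_of_dominated_loc_of_deriv_le hs
    (eventually_of_mem hs fun y hy => aestronglyMeasurable_cos_mul (hm y hy) τ)
    (integrable_cos_mul hi τ) (aestronglyMeasurable_cos_mul hm' τ)
    (ae_restrict_of_forall_mem measurableSet_Ioi fun t ht y hy =>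
      (abs_cos_mul_le _ _).trans (hvw t (mem_Ioi.1 ht).le y hy)) hw
    (ae_restrict_of_forall_mem measurableSet_Ioi fun t ht y hy =>
      (hd t (mem_Ioi.1 ht).le y hy).const_mul _)).2

lemma integrable_comp_abs (hg : IntegrableOn g (Ioi 0)) : Integrable fun t => g |t| := by
  have hpos : IntegrableOn (fun t => g |t|) (Ioi 0) :=
    hg.congr_fun (fun t ht => by rw [abs_of_pos (mem_Ioi.1 ht)]) measurableSet_Ioi
  have hneg : IntegrableOn (fun t => g |t|) (Iio 0) := by
    have hpos' : IntegrableOn (fun t => g |t|) (Ioi (-0)) := by rwa [neg_zero]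
    simpa only [abs_neg] using hpos'.comp_neg_Iio
  rw [← integrableOn_univ, ← Iic_union_Ioi (a := (0 : ℝ))]
  exact (hneg.congr_set_ae Iio_ae_eq_Iic.symm).union hpos

open scoped FourierTransform in
lemma fourier_comp_abs (hg : IntegrableOn g (Ioi 0)) (ξ : ℝ) :
    𝓕 (fun t : ℝ => (g |t| : ℂ)) ξ = 2 * cosTransform g (2 * Real.pi * |ξ|) := by
  set I : ℝ → ℂ := fun t => Complex.exp (↑(-2 * Real.pi * t * ξ) * Complex.I) • (g |t| : ℂ)
  have hI : Integrable I :=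
    (integrable_comp_abs hg).ofReal.bdd_mul (c := 1) (by fun_prop)
      (ae_of_all _ fun t => (Complex.norm_exp_ofReal_mul_I _).le)
  have hsymm (t : ℝ) :
      I t + I (-t) = ((2 * (Real.cos (2 * Real.pi * |ξ| * |t|) * g |t|) : ℝ) : ℂ) := by
    have hcos : Real.cos (2 * Real.pi * |ξ| * |t|) = Real.cos (2 * Real.pi * t * ξ) := by
      rw [← Real.cos_abs (2 * Real.pi * t * ξ), abs_mul, abs_mul, abs_of_pos Real.two_pi_pos,
        mul_right_comm]
    simp only [I, hcos, abs_neg, smul_eq_mul, Complex.ofReal_mul, Complex.ofReal_cos,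
      Complex.cos, Complex.ofReal_neg, Complex.ofReal_ofNat, mul_neg, neg_mul, neg_neg]
    ring
  have htwice : 2 * ∫ t, I t = 4 * cosTransform g (2 * Real.pi * |ξ|) := by
    calc 2 * ∫ t, I t = ∫ t, (I t + I (-t)) := by
          rw [integral_add hI hI.comp_neg, integral_neg_eq_self I volume, two_mul]
      _ = 4 * cosTransform g (2 * Real.pi * |ξ|) := by
          simp_rw [hsymm]
          rw [integral_complex_ofReal, integral_const_mul,
            integral_comp_abs (f := fun t => Real.cos (2 * Real.pi * |ξ| * t) * g t),
            ← cosTransform]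
          push_cast
          ring
  rw [Real.fourier_real_eq_integral_exp_smul]
  linear_combination htwice / 2

open scoped FourierTransform in
lemma eqOn_zero_of_cosTransform_eq_zero (hg : ContinuousOn g (Ici 0)) (hgi : IntegrableOn g (Ioi 0))
    (h0 : ∀ τ > 0, cosTransform g τ = 0) : EqOn g 0 (Ici 0) := by
  set G : ℝ → ℂ := fun t => (g |t| : ℂ)
  have hG : Continuous G :=
    Complex.continuous_ofReal.comp (hg.comp_continuous continuous_abs fun t => abs_nonneg t)
  have hFG : 𝓕 G =ᵐ[volume] 0 := by
    filter_upwards [volume.ae_ne 0] with ξ hξ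
    rw [fourier_comp_abs hgi, h0 _ (mul_pos Real.two_pi_pos (abs_pos.2 hξ))]
    simp
  have hinv := hG.fourierInv_fourier_eq (integrable_comp_abs hgi).ofReal
    ((integrable_zero _ _ _).congr hFG.symm)
  intro t ht
  have hGt : G t = 0 := by
    rw [← hinv, Real.fourierInv_eq', integral_eq_zero_of_ae]
    filter_upwards [hFG] with ξ hξ
    rw [hξ]
    simp
  simpa [G, abs_of_nonneg (mem_Ici.1 ht)] using hGt

lemma eqOn_of_cosTransform_eq (hg : ContinuousOn g (Ici 0)) (hh : ContinuousOn h (Ici 0))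
    (hgi : IntegrableOn g (Ioi 0)) (hhi : IntegrableOn h (Ioi 0))
    (hgh : ∀ τ > 0, cosTransform g τ = cosTransform h τ) : EqOn g h (Ici 0) := by
  have hzero := eqOn_zero_of_cosTransform_eq_zero (hg.sub hh) (hgi.sub hhi) fun τ hτ =>
    (cosTransform_sub hgi hhi τ).trans (sub_eq_zero.2 (hgh τ hτ))
  exact fun t ht => sub_eq_zero.1 (hzero ht)

end CosTransform

section QuarterPlane

/-- The time derivative of `u : t ↦ x ↦ u t x` on the half-line `t ≥ 0`, one-sided at `t = 0`. -/
noncomputable def timeDeriv (u : ℝ → ℝ → ℝ) (t x : ℝ) : ℝ :=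
  derivWithin (fun s => u s x) (Ici 0) t

/-- The space derivative of `u : t ↦ x ↦ u t x` on the half-line `x ≥ 0`, one-sided at `x = 0`. -/
noncomputable def spaceDeriv (u : ℝ → ℝ → ℝ) (t x : ℝ) : ℝ :=
  derivWithin (fun y => u t y) (Ici 0) x

variable {u : ℝ → ℝ → ℝ} {t x : ℝ}

lemma uniqueDiffOn_quarterPlane : UniqueDiffOn ℝ (Ici (0 : ℝ) ×ˢ Ici (0 : ℝ)) :=
  (uniqueDiffOn_Ici 0).prod (uniqueDiffOn_Ici 0)

lemma timeDeriv_eq_deriv (ht : 0 < t) : timeDeriv u t x = deriv (fun s => u s x) t :=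
  derivWithin_of_mem_nhds (Ici_mem_nhds ht)

lemma spaceDeriv_eq_deriv (hx : 0 < x) : spaceDeriv u t x = deriv (fun y => u t y) x :=
  derivWithin_of_mem_nhds (Ici_mem_nhds hx)

section Differentiable

variable (hu : DifferentiableOn ℝ (Function.uncurry u) (Ici 0 ×ˢ Ici 0))

include hu

lemma hasDerivWithinAt_time_fderivWithin (ht : 0 ≤ t) (hx : 0 ≤ x) :
    HasDerivWithinAt (fun s => u s x)
      (fderivWithin ℝ (Function.uncurry u) (Ici 0 ×ˢ Ici 0) (t, x) (1, 0)) (Ici 0) t := by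
  have hslice : HasDerivWithinAt (fun s : ℝ => (s, x)) (1, 0) (Ici 0) t :=
    ((hasDerivAt_id t).prodMk (hasDerivAt_const t x)).hasDerivWithinAt
  exact (hu (t, x) ⟨ht, hx⟩).hasFDerivWithinAt.comp_hasDerivWithinAt t hslice
    fun _ hs => mk_mem_prod hs hx

lemma hasDerivWithinAt_space_fderivWithin (ht : 0 ≤ t) (hx : 0 ≤ x) :
    HasDerivWithinAt (fun y => u t y)
      (fderivWithin ℝ (Function.uncurry u) (Ici 0 ×ˢ Ici 0) (t, x) (0, 1)) (Ici 0) x := by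
  have hslice : HasDerivWithinAt (fun y : ℝ => (t, y)) (0, 1) (Ici 0) x :=
    ((hasDerivAt_const x t).prodMk (hasDerivAt_id x)).hasDerivWithinAt
  exact (hu (t, x) ⟨ht, hx⟩).hasFDerivWithinAt.comp_hasDerivWithinAt x hslice
    fun _ hy => mk_mem_prod ht hy

lemma timeDeriv_eq_fderivWithin (ht : 0 ≤ t) (hx : 0 ≤ x) :
    timeDeriv u t x = fderivWithin ℝ (Function.uncurry u) (Ici 0 ×ˢ Ici 0) (t, x) (1, 0) :=
  (hasDerivWithinAt_time_fderivWithin hu ht hx).derivWithin (uniqueDiffOn_Ici 0 t ht)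

lemma spaceDeriv_eq_fderivWithin (ht : 0 ≤ t) (hx : 0 ≤ x) :
    spaceDeriv u t x = fderivWithin ℝ (Function.uncurry u) (Ici 0 ×ˢ Ici 0) (t, x) (0, 1) :=
  (hasDerivWithinAt_space_fderivWithin hu ht hx).derivWithin (uniqueDiffOn_Ici 0 x hx)

lemma hasDerivAt_timeDeriv (ht : 0 < t) (hx : 0 ≤ x) :
    HasDerivAt (fun s => u s x) (timeDeriv u t x) t := by
  rw [timeDeriv_eq_fderivWithin hu ht.le hx]
  exact (hasDerivWithinAt_time_fderivWithin hu ht.le hx).hasDerivAt (Ici_mem_nhds ht)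

lemma hasDerivAt_spaceDeriv (ht : 0 ≤ t) (hx : 0 < x) :
    HasDerivAt (u t) (spaceDeriv u t x) x := by
  rw [spaceDeriv_eq_fderivWithin hu ht hx.le]
  exact (hasDerivWithinAt_space_fderivWithin hu ht hx.le).hasDerivAt (Ici_mem_nhds hx)

lemma hasDerivAt_along_curve {X : ℝ → ℝ} {X' : ℝ} (ht : 0 < t) (hXt : 0 < X t)
    (hX : HasDerivAt X X' t) :
    HasDerivAt (fun s => u s (X s)) (timeDeriv u t (X t) + X' * spaceDeriv u t (X t)) t := by
  have hmem : Ici 0 ×ˢ Ici 0 ∈ 𝓝 (t, X t) := prod_mem_nhds (Ici_mem_nhds ht) (Ici_mem_nhds hXt)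
  have hcomp := ((hu _ (mem_of_mem_nhds hmem)).hasFDerivWithinAt.hasFDerivAt hmem).comp_hasDerivAt t
    ((hasDerivAt_id t).prodMk hX)
  refine hcomp.congr_deriv ?_
  have hsplit : ((1 : ℝ), X') = (1, 0) + X' • (0, 1) := by simp
  rw [timeDeriv_eq_fderivWithin hu ht.le hXt.le, spaceDeriv_eq_fderivWithin hu ht.le hXt.le, hsplit,
    map_add, map_smul, smul_eq_mul]

end Differentiable

section ContDiff

lemma contDiffOn_timeDeriv {n : ℕ}
    (hu : ContDiffOn ℝ (n + 1) (Function.uncurry u) (Ici 0 ×ˢ Ici 0)) :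
    ContDiffOn ℝ n (Function.uncurry (timeDeriv u)) (Ici 0 ×ˢ Ici 0) :=
  ((hu.fderivWithin uniqueDiffOn_quarterPlane le_rfl).clm_apply contDiffOn_const).congr
    fun _ hp => timeDeriv_eq_fderivWithin (hu.differentiableOn (by simp)) hp.1 hp.2

lemma contDiffOn_spaceDeriv {n : ℕ}
    (hu : ContDiffOn ℝ (n + 1) (Function.uncurry u) (Ici 0 ×ˢ Ici 0)) :
    ContDiffOn ℝ n (Function.uncurry (spaceDeriv u)) (Ici 0 ×ˢ Ici 0) :=
  ((hu.fderivWithin uniqueDiffOn_quarterPlane le_rfl).clm_apply contDiffOn_const).congr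
    fun _ hp => spaceDeriv_eq_fderivWithin (hu.differentiableOn (by simp)) hp.1 hp.2

variable (hu : ContDiffOn ℝ 2 (Function.uncurry u) (Ici 0 ×ˢ Ici 0))

include hu

lemma contDiffOn_one_timeDeriv :
    ContDiffOn ℝ 1 (Function.uncurry (timeDeriv u)) (Ici 0 ×ˢ Ici 0) :=
  contDiffOn_timeDeriv (n := 1) (by simpa only [Nat.cast_one, one_add_one_eq_two] using hu)

lemma contDiffOn_one_spaceDeriv :
    ContDiffOn ℝ 1 (Function.uncurry (spaceDeriv u)) (Ici 0 ×ˢ Ici 0) :=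
  contDiffOn_spaceDeriv (n := 1) (by simpa only [Nat.cast_one, one_add_one_eq_two] using hu)

lemma continuousOn_timeDeriv_timeDeriv :
    ContinuousOn (Function.uncurry (timeDeriv (timeDeriv u))) (Ici 0 ×ˢ Ici 0) :=
  (contDiffOn_timeDeriv (n := 0) (by simpa using! contDiffOn_one_timeDeriv hu)).continuousOn

lemma continuousOn_spaceDeriv_spaceDeriv :
    ContinuousOn (Function.uncurry (spaceDeriv (spaceDeriv u))) (Ici 0 ×ˢ Ici 0) :=
  (contDiffOn_spaceDeriv (n := 0) (by simpa using! contDiffOn_one_spaceDeriv hu)).continuousOn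

lemma timeDeriv_spaceDeriv_comm (ht : 0 ≤ t) (hx : 0 ≤ x) :
    timeDeriv (spaceDeriv u) t x = spaceDeriv (timeDeriv u) t x := by
  set Q : Set (ℝ × ℝ) := Ici 0 ×ˢ Ici 0
  set D := fderivWithin ℝ (Function.uncurry u) Q
  have hp : (t, x) ∈ Q := ⟨ht, hx⟩
  have hD : DifferentiableWithinAt ℝ D Q (t, x) :=
    (hu.fderivWithin (m := 1) uniqueDiffOn_quarterPlane
      one_add_one_eq_two.le).differentiableOn one_ne_zero _ hp
  have happly (v : ℝ × ℝ) : fderivWithin ℝ (fun p => D p v) Q (t, x) =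
      (fderivWithin ℝ D Q (t, x)).flip v := by
    rw [fderivWithin_clm_apply (uniqueDiffOn_quarterPlane _ hp) hD (by fun_prop),
      fderivWithin_const_apply, ContinuousLinearMap.comp_zero, zero_add]
  have hu1 : DifferentiableOn ℝ (Function.uncurry u) Q := hu.differentiableOn two_ne_zero
  rw [timeDeriv_eq_fderivWithin ((contDiffOn_one_spaceDeriv hu).differentiableOn one_ne_zero) ht hx,
    spaceDeriv_eq_fderivWithin ((contDiffOn_one_timeDeriv hu).differentiableOn one_ne_zero) ht hx,
    fderivWithin_congr' (f₁ := Function.uncurry (spaceDeriv u))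
      (fun q hq => spaceDeriv_eq_fderivWithin hu1 hq.1 hq.2) hp,
    fderivWithin_congr' (f₁ := Function.uncurry (timeDeriv u))
      (fun q hq => timeDeriv_eq_fderivWithin hu1 hq.1 hq.2) hp, happly, happly]
  refine (hu _ hp).isSymmSndFDerivWithinAt (by simp) uniqueDiffOn_quarterPlane ?_ hp (1, 0) (0, 1)
  rw [interior_prod_eq, closure_prod_eq, interior_Ici, closure_Ioi]
  exact hp

end ContDiff

end QuarterPlane

section FrequencyMode

lemma integral_cos_mul_deriv_deriv {y y' y'' : ℝ → ℝ} {T : ℝ} (hT : 0 ≤ T)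
    (hy : ContinuousOn y (Icc 0 T)) (hy' : ContinuousOn y' (Icc 0 T))
    (hy'' : ContinuousOn y'' (Icc 0 T)) (hd : ∀ t ∈ Ioo 0 T, HasDerivAt y (y' t) t)
    (hd' : ∀ t ∈ Ioo 0 T, HasDerivAt y' (y'' t) t) (τ : ℝ) :
    ∫ t in 0..T, Real.cos (τ * t) * y'' t = Real.cos (τ * T) * y' T - y' 0 +
      τ * Real.sin (τ * T) * y T - τ ^ 2 * ∫ t in 0..T, Real.cos (τ * t) * y t := by
  have hint {g : ℝ → ℝ} (hg : ContinuousOn g (Icc 0 T)) :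
      IntervalIntegrable (fun t => Real.cos (τ * t) * g t) volume 0 T :=
    (continuousOn_cos_mul hg τ).intervalIntegrable_of_Icc hT
  have hprimitive := intervalIntegral.integral_eq_sub_of_hasDerivAt_of_le
    (f := fun t => Real.cos (τ * t) * y' t + τ * Real.sin (τ * t) * y t)
    (f' := fun t => Real.cos (τ * t) * y'' t + τ ^ 2 * (Real.cos (τ * t) * y t)) hT
    ((continuousOn_cos_mul hy' τ).add (Continuous.continuousOn (by fun_prop) |>.mul hy))
    (fun t ht => by
      have hlin : HasDerivAt (fun t : ℝ => τ * t) τ t := by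
        simpa only [mul_one] using! (hasDerivAt_id t).const_mul τ
      refine ((hlin.cos.mul (hd' t ht)).add ((hlin.sin.const_mul τ).mul (hd t ht))).congr_deriv ?_
      ring)
    ((hint hy'').add ((hint hy).const_mul _))
  rw [intervalIntegral.integral_add (hint hy'') ((hint hy).const_mul _),
    intervalIntegral.integral_const_mul] at hprimitive
  simp only [mul_zero, Real.cos_zero, Real.sin_zero, zero_mul, one_mul, add_zero] at hprimitive
  linear_combination hprimitive

lemma hasDerivAt_integral_cos_mul {v v' : ℝ → ℝ → ℝ} {α β T x : ℝ} (hT : 0 ≤ T)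
    (hv : ContinuousOn (Function.uncurry v) (Icc 0 T ×ˢ Icc α β))
    (hv' : ContinuousOn (Function.uncurry v') (Icc 0 T ×ˢ Icc α β))
    (hd : ∀ t ∈ Icc 0 T, ∀ y ∈ Ioo α β, HasDerivAt (v t) (v' t y) y) (hx : x ∈ Ioo α β) (τ : ℝ) :
    HasDerivAt (fun y => ∫ t in 0..T, Real.cos (τ * t) * v t y)
      (∫ t in 0..T, Real.cos (τ * t) * v' t x) x := by
  obtain ⟨B, hB⟩ := (isCompact_Icc.prod isCompact_Icc).exists_bound_of_continuousOn hv'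
  have hsub : uIoc 0 T ⊆ Icc 0 T := (uIoc_of_le hT).trans_subset Ioc_subset_Icc_self
  have hint {g : ℝ → ℝ → ℝ} (hg : ContinuousOn (Function.uncurry g) (Icc 0 T ×ˢ Icc α β))
      {y : ℝ} (hy : y ∈ Ioo α β) :
      IntervalIntegrable (fun t => Real.cos (τ * t) * g t y) volume 0 T :=
    (continuousOn_cos_mul (hg.uncurry_right y (Ioo_subset_Icc_self hy)) τ).intervalIntegrable_of_Icc
      hT
  exact (intervalIntegral.hasDerivAt_integral_of_dominated_loc_of_deriv_le (bound := fun _ => B)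
    (Ioo_mem_nhds hx.1 hx.2)
    (eventually_of_mem (Ioo_mem_nhds hx.1 hx.2) fun y hy => (hint hv hy).def'.1)
    (hint hv hx) (hint hv' hx).def'.1
    (ae_of_all _ fun t ht y hy =>
      (abs_cos_mul_le _ _).trans (hB (t, y) ⟨hsub ht, Ioo_subset_Icc_self hy⟩))
    intervalIntegrable_const
    (ae_of_all _ fun t ht y hy => (hd t (hsub ht) y hy).const_mul _)).2

lemma exists_tendsto_atTop_cos_mul_eq_zero {τ : ℝ} (hτ : 0 < τ) :
    ∃ T : ℕ → ℝ, (∀ n, 0 ≤ T n) ∧ (∀ n, Real.cos (τ * T n) = 0) ∧ Tendsto T atTop atTop := by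
  refine ⟨fun n => (n + 1 / 2) * Real.pi / τ, fun n => by positivity, fun n => ?_, ?_⟩
  · refine Real.cos_eq_zero_iff.2 ⟨n, ?_⟩
    push_cast
    field_simp
  · exact ((tendsto_atTop_add_const_right _ _ tendsto_natCast_atTop_atTop).atTop_mul_const
      Real.pi_pos).atTop_div_const hτ

end FrequencyMode

section DecayingWave

variable {c f w : ℝ → ℝ} {u : ℝ → ℝ → ℝ} {b c0 t x : ℝ}

namespace IsWaveSolution

lemma timeDeriv_timeDeriv (hu : IsWaveSolution c f u) (ht : 0 < t) (hx : 0 < x) :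
    timeDeriv (timeDeriv u) t x = c x ^ 2 * spaceDeriv (spaceDeriv u) t x := by
  have htime : (fun s => timeDeriv u s x) =ᶠ[𝓝 t] fun s => deriv (fun r => u r x) s :=
    eventually_of_mem (Ioi_mem_nhds ht) fun s hs => timeDeriv_eq_deriv hs
  have hspace : (fun y => spaceDeriv u t y) =ᶠ[𝓝 x] fun y => deriv (fun r => u t r) y :=
    eventually_of_mem (Ioi_mem_nhds hx) fun y hy => spaceDeriv_eq_deriv hy
  rw [timeDeriv_eq_deriv ht, spaceDeriv_eq_deriv hx, htime.deriv_eq, hspace.deriv_eq]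
  exact hu.2.1 t ht x hx

lemma initial (hu : IsWaveSolution c f u) (hx : 0 ≤ x) : u 0 x = f x :=
  hu.2.2.1 x hx

lemma timeDeriv_initial (hu : IsWaveSolution c f u) (hx : 0 ≤ x) : timeDeriv u 0 x = 0 :=
  hu.2.2.2.1 x hx

lemma differentiableOn (hu : IsWaveSolution c f u) :
    DifferentiableOn ℝ (Function.uncurry u) (Ici 0 ×ˢ Ici 0) :=
  hu.1.differentiableOn two_ne_zero

lemma spaceDeriv_initial (hu : IsWaveSolution c f u) (hf : ∀ x ≥ b, f x = 0) (hb : 0 ≤ b)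
    (hx : b ≤ x) : spaceDeriv u 0 x = 0 := by
  have hzero : ∀ y ∈ Ici b, u 0 y = 0 := fun y hy => (hu.initial (hb.trans hy)).trans (hf y hy)
  have hx0 := hb.trans hx
  rw [spaceDeriv_eq_fderivWithin hu.differentiableOn le_rfl hx0]
  exact (uniqueDiffOn_Ici b x hx).eq_deriv _
    ((hasDerivWithinAt_space_fderivWithin hu.differentiableOn le_rfl hx0).mono
      (Ici_subset_Ici.2 hb))
    ((hasDerivWithinAt_const x (Ici b) (0 : ℝ)).congr hzero (hzero x hx))

/- In the homogeneous part `u_t + c0 u_x` is constant along the characteristics `x + c0 t = const`,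
which issue from the part of the line that is initially at rest. -/
lemma timeDeriv_add_mul_spaceDeriv_eq_zero (hu : IsWaveSolution c f u) (hc0 : 0 < c0) (hb : 0 ≤ b)
    (hc : ∀ x ≥ b, c x = c0) (hf : ∀ x ≥ b, f x = 0) (ht : 0 ≤ t) (hx : b ≤ x) :
    timeDeriv u t x + c0 * spaceDeriv u t x = 0 := by
  set X : ℝ → ℝ := fun s => x + c0 * (t - s) with hX_def
  have hX (s : ℝ) : HasDerivAt X (-c0) s := by
    simpa only [mul_neg, mul_one] using!
      (((hasDerivAt_id s).const_sub t).const_mul c0).const_add x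
  have hXle : ∀ s ∈ Icc 0 t, b ≤ X s := fun s hs =>
    hx.trans (le_add_of_nonneg_right (mul_nonneg hc0.le (sub_nonneg.2 hs.2)))
  have hmaps : MapsTo (fun s => (s, X s)) (Icc 0 t) (Ici 0 ×ˢ Ici 0) := fun s hs =>
    mk_mem_prod hs.1 (hb.trans (hXle s hs))
  have hcurve : ContinuousOn (fun s => (s, X s)) (Icc 0 t) := by fun_prop
  have hut := contDiffOn_one_timeDeriv hu.1
  have hux := contDiffOn_one_spaceDeriv hu.1
  have hconst := eq_right_of_hasDerivAt_zero
    (f := fun s => timeDeriv u s (X s) + c0 * spaceDeriv u s (X s))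
    ((hut.continuousOn.comp hcurve hmaps).add ((hux.continuousOn.comp hcurve hmaps).const_mul c0))
    (fun s hs => ?_) (left_mem_Icc.2 ht)
  · have h0 := hXle 0 (left_mem_Icc.2 ht)
    simp only [hX_def, sub_self, mul_zero, add_zero] at hconst
    rw [← hconst, hu.timeDeriv_initial (hb.trans h0), hu.spaceDeriv_initial hf hb h0]
    ring
  · have hXs : 0 < X s :=
      add_pos_of_nonneg_of_pos (hb.trans hx) (mul_pos hc0 (sub_pos.2 hs.2))
    have hwave := hu.timeDeriv_timeDeriv hs.1 hXs
    rw [hc _ (hXle s (Ioo_subset_Icc_self hs))] at hwave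
    refine ((hasDerivAt_along_curve (hut.differentiableOn one_ne_zero) hs.1 hXs (hX s)).add
      ((hasDerivAt_along_curve (hux.differentiableOn one_ne_zero) hs.1 hXs
        (hX s)).const_mul c0)).congr_deriv ?_
    rw [timeDeriv_spaceDeriv_comm hu.1 hs.1.le hXs.le, hwave]
    ring

end IsWaveSolution

end DecayingWave

section DecayingWave

/-- The wave `u` and its space derivative are dominated on `s` by an integrable function `w` of time
that tends to `0`, so that both have a cosine transform in time at every point of `s`. -/
structure DecaysOn (u : ℝ → ℝ → ℝ) (s : Set ℝ) (w : ℝ → ℝ) : Prop where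
  integrableOn_bound : IntegrableOn w (Ioi 0)
  tendsto_bound : Tendsto w atTop (𝓝 0)
  abs_le : ∀ t ≥ 0, ∀ x ∈ s, |u t x| ≤ w t
  abs_spaceDeriv_le : ∀ t ≥ 0, ∀ x ∈ s, |spaceDeriv u t x| ≤ w t

variable {c f w : ℝ → ℝ} {u : ℝ → ℝ → ℝ} {b t x τ : ℝ}

lemma aestronglyMeasurable_time_slice {v : ℝ → ℝ → ℝ}
    (hv : ContinuousOn (Function.uncurry v) (Ici 0 ×ˢ Ici 0)) (hx : 0 ≤ x) :
    AEStronglyMeasurable (fun t => v t x) (volume.restrict (Ioi 0)) :=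
  ((hv.uncurry_right x hx).mono Ioi_subset_Ici_self).aestronglyMeasurable measurableSet_Ioi

namespace DecaysOn

lemma integrableOn (hw : DecaysOn u (Icc 0 b) w)
    (hu : ContinuousOn (Function.uncurry u) (Ici 0 ×ˢ Ici 0)) (hx : x ∈ Icc 0 b) :
    IntegrableOn (fun t => u t x) (Ioi 0) :=
  hw.integrableOn_bound.mono' (aestronglyMeasurable_time_slice hu hx.1)
    (ae_restrict_of_forall_mem measurableSet_Ioi fun t ht => hw.abs_le t (mem_Ioi.1 ht).le x hx)

lemma integrableOn_spaceDeriv (hw : DecaysOn u (Icc 0 b) w)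
    (hu : ContinuousOn (Function.uncurry (spaceDeriv u)) (Ici 0 ×ˢ Ici 0)) (hx : x ∈ Icc 0 b) :
    IntegrableOn (fun t => spaceDeriv u t x) (Ioi 0) :=
  hw.integrableOn_bound.mono' (aestronglyMeasurable_time_slice hu hx.1)
    (ae_restrict_of_forall_mem measurableSet_Ioi fun t ht =>
      hw.abs_spaceDeriv_le t (mem_Ioi.1 ht).le x hx)

lemma tendsto_remainder (hw : DecaysOn u (Icc 0 b) w) (τ M : ℝ) :
    Tendsto (fun T => M * (τ * w T + τ ^ 2 * ∫ t in Ioi T, w t)) atTop (𝓝 0) := by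
  simpa using ((hw.tendsto_bound.const_mul τ).add
    ((tendsto_integral_Ioi_zero tendsto_id).const_mul (τ ^ 2))).const_mul M

end DecaysOn

namespace IsWaveSolution

lemma continuousOn (hu : IsWaveSolution c f u) :
    ContinuousOn (Function.uncurry u) (Ici 0 ×ˢ Ici 0) :=
  hu.1.continuousOn

lemma continuousOn_spaceDeriv (hu : IsWaveSolution c f u) :
    ContinuousOn (Function.uncurry (spaceDeriv u)) (Ici 0 ×ˢ Ici 0) :=
  (contDiffOn_one_spaceDeriv hu.1).continuousOn

lemma frequencyMode_zero (hu : IsWaveSolution c f u) (τ : ℝ) : frequencyMode u τ 0 = 0 :=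
  (cosTransform_congr (fun t ht => hu.2.2.2.2 t (mem_Ioi.1 ht).le) τ).trans (cosTransform_zero τ)

lemma integral_cos_mul_spaceDeriv_spaceDeriv (hu : IsWaveSolution c f u) (hx : 0 < x)
    (hcx : c x ≠ 0) {T : ℝ} (hT : 0 ≤ T) (hcos : Real.cos (τ * T) = 0) :
    ∫ t in 0..T, Real.cos (τ * t) * spaceDeriv (spaceDeriv u) t x = stringDensity c x *
      (τ * Real.sin (τ * T) * u T x - τ ^ 2 * ∫ t in 0..T, Real.cos (τ * t) * u t x) := by
  have hwave : ∫ t in 0..T, Real.cos (τ * t) * timeDeriv (timeDeriv u) t x =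
      c x ^ 2 * ∫ t in 0..T, Real.cos (τ * t) * spaceDeriv (spaceDeriv u) t x := by
    rw [← intervalIntegral.integral_const_mul]
    refine intervalIntegral.integral_congr_ae (ae_of_all _ fun t ht => ?_)
    rw [uIoc_of_le hT] at ht
    rw [hu.timeDeriv_timeDeriv ht.1 hx, mul_left_comm]
  have hslice {v : ℝ → ℝ → ℝ} (hv : ContinuousOn (Function.uncurry v) (Ici 0 ×ˢ Ici 0)) :
      ContinuousOn (fun t => v t x) (Icc 0 T) :=
    (hv.uncurry_right x hx.le).mono Icc_subset_Ici_self
  have hut := contDiffOn_one_timeDeriv hu.1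
  have hparts := integral_cos_mul_deriv_deriv hT (hslice hu.continuousOn) (hslice hut.continuousOn)
    (hslice (continuousOn_timeDeriv_timeDeriv hu.1))
    (fun t ht => hasDerivAt_timeDeriv hu.differentiableOn ht.1 hx.le)
    (fun t ht => hasDerivAt_timeDeriv (hut.differentiableOn one_ne_zero) ht.1 hx.le) τ
  rw [hwave, hcos, hu.timeDeriv_initial hx.le, zero_mul, sub_zero, zero_add] at hparts
  rw [← hparts, stringDensity]
  field_simp

lemma abs_integral_cos_mul_sub_le (hu : IsWaveSolution c f u) (hw : DecaysOn u (Icc 0 b) w)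
    (hx : x ∈ Ioc 0 b) (hcx : c x ≠ 0) (hτ : 0 ≤ τ) {T : ℝ} (hT : 0 ≤ T)
    (hcos : Real.cos (τ * T) = 0) :
    |(∫ t in 0..T, Real.cos (τ * t) * spaceDeriv (spaceDeriv u) t x) -
        -τ ^ 2 * stringDensity c x * frequencyMode u τ x| ≤
      |stringDensity c x| * (τ * w T + τ ^ 2 * ∫ t in Ioi T, w t) := by
  have hxb := Ioc_subset_Icc_self hx
  have htail := abs_integral_sub_cosTransform_le (hw.integrableOn hu.continuousOn hxb)
    hw.integrableOn_bound (fun t ht => hw.abs_le t ht x hxb) τ hT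
  have hsplit : (∫ t in 0..T, Real.cos (τ * t) * spaceDeriv (spaceDeriv u) t x) -
      -τ ^ 2 * stringDensity c x * frequencyMode u τ x =
      stringDensity c x * (τ * (Real.sin (τ * T) * u T x) -
        τ ^ 2 * ((∫ t in 0..T, Real.cos (τ * t) * u t x) - cosTransform (fun t => u t x) τ)) := by
    rw [hu.integral_cos_mul_spaceDeriv_spaceDeriv hx.1 hcx hT hcos, frequencyMode]
    ring
  have hsin : |Real.sin (τ * T) * u T x| ≤ w T := by
    rw [abs_mul]
    exact (mul_le_of_le_one_left (abs_nonneg _) (Real.abs_sin_le_one _)).trans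
      (hw.abs_le T hT x hxb)
  rw [hsplit, abs_mul]
  refine mul_le_mul_of_nonneg_left ((abs_sub _ _).trans ?_) (abs_nonneg _)
  rw [abs_mul τ, abs_mul (τ ^ 2), abs_of_nonneg hτ, abs_of_nonneg (sq_nonneg τ)]
  gcongr

lemma hasDerivAt_frequencyMode_spaceDeriv (hu : IsWaveSolution c f u) (hc : IsSpeedOn c 0 b)
    (hw : DecaysOn u (Icc 0 b) w) (hτ : 0 < τ) (hx : x ∈ Ioo 0 b) :
    HasDerivAt (frequencyMode (spaceDeriv u) τ)
      (-τ ^ 2 * stringDensity c x * frequencyMode u τ x) x := by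
  obtain ⟨T, hT, hcos, hTlim⟩ := exists_tendsto_atTop_cos_mul_eq_zero hτ
  obtain ⟨M, hM⟩ := isCompact_Icc.exists_bound_of_continuousOn hc.continuousOn_stringDensity
  have hstrip {v : ℝ → ℝ → ℝ} (hv : ContinuousOn (Function.uncurry v) (Ici 0 ×ˢ Ici 0)) (n : ℕ) :
      ContinuousOn (Function.uncurry v) (Icc 0 (T n) ×ˢ Icc 0 b) :=
    hv.mono (prod_mono Icc_subset_Ici_self Icc_subset_Ici_self)
  have hderiv (n : ℕ) (y : ℝ) (hy : y ∈ Ioo 0 b) :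
      HasDerivAt (fun y => ∫ t in 0..T n, Real.cos (τ * t) * spaceDeriv u t y)
        (∫ t in 0..T n, Real.cos (τ * t) * spaceDeriv (spaceDeriv u) t y) y :=
    hasDerivAt_integral_cos_mul (hT n) (hstrip hu.continuousOn_spaceDeriv n)
      (hstrip (continuousOn_spaceDeriv_spaceDeriv hu.1) n)
      (fun t ht z hz => hasDerivAt_spaceDeriv
        ((contDiffOn_one_spaceDeriv hu.1).differentiableOn one_ne_zero) ht.1 hz.1) hy τ
  have huniform : TendstoUniformlyOn
      (fun n y => ∫ t in 0..T n, Real.cos (τ * t) * spaceDeriv (spaceDeriv u) t y)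
      (fun y => -τ ^ 2 * stringDensity c y * frequencyMode u τ y) atTop (Ioo 0 b) := by
    refine Metric.tendstoUniformlyOn_iff.2 fun ε hε => ?_
    filter_upwards [((hw.tendsto_remainder τ M).comp hTlim).eventually_lt_const hε] with n hn y hy
    have hyb := Ioo_subset_Icc_self hy
    rw [dist_comm, Real.dist_eq]
    refine ((hu.abs_integral_cos_mul_sub_le hw (Ioo_subset_Ioc_self hy) (hc.ne_zero y hyb) hτ.le
      (hT n) (hcos n)).trans (mul_le_mul_of_nonneg_right (hM y hyb) ?_)).trans_lt hn
    have hw0 (t : ℝ) (ht : 0 ≤ t) : 0 ≤ w t := (abs_nonneg _).trans (hw.abs_le t ht y hyb)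
    have htail : 0 ≤ ∫ t in Ioi (T n), w t :=
      setIntegral_nonneg measurableSet_Ioi fun t ht => hw0 t ((hT n).trans (mem_Ioi.1 ht).le)
    have := hw0 (T n) (hT n)
    positivity
  refine hasDerivAt_of_tendstoUniformlyOn isOpen_Ioo huniform (Eventually.of_forall hderiv)
    (fun y hy => intervalIntegral_tendsto_integral_Ioi 0 ?_ hTlim) hx
  exact integrable_cos_mul
    (hw.integrableOn_spaceDeriv hu.continuousOn_spaceDeriv (Ioo_subset_Icc_self hy)) τ

lemma isStringSolution_frequencyMode (hu : IsWaveSolution c f u) (hc : IsSpeedOn c 0 b)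
    (hw : DecaysOn u (Icc 0 b) w) (hτ : 0 < τ) :
    IsStringSolution (stringDensity c) 0 b (-τ ^ 2) (frequencyMode u τ)
      (frequencyMode (spaceDeriv u) τ) where
  continuousOn := continuousOn_frequencyMode
    (fun _ hx => aestronglyMeasurable_time_slice hu.continuousOn hx.1)
    (fun t ht => (hu.continuousOn.uncurry_left t ht).mono Icc_subset_Ici_self)
    hw.integrableOn_bound hw.abs_le τ
  continuousOn_deriv := continuousOn_frequencyMode
    (fun _ hx => aestronglyMeasurable_time_slice hu.continuousOn_spaceDeriv hx.1)
    (fun t ht => (hu.continuousOn_spaceDeriv.uncurry_left t ht).mono Icc_subset_Ici_self)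
    hw.integrableOn_bound hw.abs_spaceDeriv_le τ
  hasDerivAt _ hx := hasDerivAt_frequencyMode (Ioo_mem_nhds hx.1 hx.2)
    (fun _ hy => aestronglyMeasurable_time_slice hu.continuousOn hy.1.le)
    (hw.integrableOn hu.continuousOn (Ioo_subset_Icc_self hx))
    (aestronglyMeasurable_time_slice hu.continuousOn_spaceDeriv hx.1.le)
    (fun _ ht _ hy => hasDerivAt_spaceDeriv hu.differentiableOn ht hy.1)
    hw.integrableOn_bound (fun t ht y hy => hw.abs_spaceDeriv_le t ht y (Ioo_subset_Icc_self hy)) τ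
  hasDerivAt_deriv _ hx := hu.hasDerivAt_frequencyMode_spaceDeriv hc hw hτ hx

end IsWaveSolution

end DecayingWave

section Uniqueness

/-- `u` is a wave on the half-line with speed `c` and initial displacement `f` whose medium is
homogeneous and initially at rest to the right of `b`, and which decays in time on `[0, b]`. -/
structure IsDecayingWave (c0 b : ℝ) (c f : ℝ → ℝ) (u : ℝ → ℝ → ℝ) : Prop where
  isSpeedOn : IsSpeedOn c 0 b
  speed_eq : ∀ x ≥ b, c x = c0
  initial_eq_zero : ∀ x ≥ b, f x = 0
  isWaveSolution : IsWaveSolution c f u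
  exists_decaysOn : ∃ w, DecaysOn u (Icc 0 b) w

lemma IsWaveSolution.isDecayingWave {c0 : ℝ} {c f : ℝ → ℝ} {u : ℝ → ℝ → ℝ}
    (hu : IsWaveSolution c f u) (hc : IsWaveSpeed c0 c)
    (hf : ∀ x ∈ Ici (0 : ℝ), x ∉ Ioo (0 : ℝ) 1 → f x = 0) (hd : DecaysExp u) :
    IsDecayingWave c0 1 c f u where
  isSpeedOn :=
    ⟨(hc.1.of_le one_le_two).mono Icc_subset_Ici_self, fun x hx => hc.2.1 x hx.1⟩
  speed_eq x hx := hc.2.2 x (zero_le_one.trans hx) fun h => h.2.not_ge hx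
  initial_eq_zero x hx := hf x (zero_le_one.trans hx) fun h => h.2.not_ge hx
  isWaveSolution := hu
  exists_decaysOn := by
    obtain ⟨C, -, κ, hκ, hCκ⟩ := hd
    have hexp : Tendsto (fun t => C * Real.exp (-κ * t)) atTop (𝓝 0) := by
      simpa using (Real.tendsto_exp_atBot.comp
        (tendsto_id.const_mul_atTop_of_neg (neg_lt_zero.2 hκ))).const_mul C
    exact ⟨fun t => C * Real.exp (-κ * t), (exp_neg_integrableOn_Ioi 0 hκ).const_mul C, hexp,
      fun t ht x hx => (le_add_of_nonneg_right (abs_nonneg _)).trans (hCκ t ht x hx),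
      fun t ht x hx => (le_add_of_nonneg_left (abs_nonneg _)).trans (hCκ t ht x hx)⟩

namespace IsDecayingWave

variable {c0 b t τ x : ℝ} {c f c₁ c₂ f₁ f₂ : ℝ → ℝ} {u u₁ u₂ : ℝ → ℝ → ℝ}

lemma integrableOn (h : IsDecayingWave c0 b c f u) (hx : x ∈ Icc 0 b) :
    IntegrableOn (fun t => u t x) (Ioi 0) :=
  h.exists_decaysOn.elim fun _ hw => hw.integrableOn h.isWaveSolution.continuousOn hx

lemma integrableOn_spaceDeriv (h : IsDecayingWave c0 b c f u) (hx : x ∈ Icc 0 b) :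
    IntegrableOn (fun t => spaceDeriv u t x) (Ioi 0) :=
  h.exists_decaysOn.elim fun _ hw =>
    hw.integrableOn_spaceDeriv h.isWaveSolution.continuousOn_spaceDeriv hx

lemma speed_pos (h : IsDecayingWave c0 b c f u) (hb : 0 ≤ b) : 0 < c0 :=
  (h.isSpeedOn.pos b (right_mem_Icc.2 hb)).trans_eq (h.speed_eq b le_rfl)

lemma isStringSolution (h : IsDecayingWave c0 b c f u) (hτ : 0 < τ) :
    IsStringSolution (stringDensity c) 0 b (-τ ^ 2) (frequencyMode u τ)
      (frequencyMode (spaceDeriv u) τ) :=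
  h.exists_decaysOn.elim fun _ hw =>
    h.isWaveSolution.isStringSolution_frequencyMode h.isSpeedOn hw hτ

lemma frequencyMode_eq (h : IsDecayingWave c0 b c f u) (hτ : 0 < τ) (hx : x ∈ Icc 0 b) :
    frequencyMode u τ x = frequencyMode u τ b * stringSeries (stringDensity c) b 1 0 (-τ ^ 2) x +
      frequencyMode (spaceDeriv u) τ b * stringSeries (stringDensity c) b 0 1 (-τ ^ 2) x :=
  (h.isStringSolution hτ).eq_stringSeries_combination h.isSpeedOn.continuousOn_stringDensity hx

lemma initial_eq_of_frequencyMode_eq (h₁ : IsDecayingWave c0 b c₁ f₁ u₁)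
    (h₂ : IsDecayingWave c0 b c₂ f₂ u₂) (hx : x ∈ Icc 0 b)
    (hmode : ∀ τ > 0, frequencyMode u₁ τ x = frequencyMode u₂ τ x) : f₁ x = f₂ x := by
  have hu := eqOn_of_cosTransform_eq (h₁.isWaveSolution.continuousOn.uncurry_right x hx.1)
    (h₂.isWaveSolution.continuousOn.uncurry_right x hx.1) (h₁.integrableOn hx) (h₂.integrableOn hx)
    hmode
  rw [← h₁.isWaveSolution.initial hx.1, ← h₂.isWaveSolution.initial hx.1]
  exact hu self_mem_Ici

lemma exists_cauchyData_ne_zero (h : IsDecayingWave c0 b c f u) (hf : ∃ x ∈ Ici 0, f x ≠ 0) :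
    ∃ τ > 0, frequencyMode u τ b ≠ 0 ∨ frequencyMode (spaceDeriv u) τ b ≠ 0 := by
  by_contra! hzero
  obtain ⟨x, hx, hfx⟩ := hf
  have hxb : x ∈ Icc 0 b := ⟨hx, le_of_not_ge fun hbx => hfx (h.initial_eq_zero x hbx)⟩
  have hux := eqOn_zero_of_cosTransform_eq_zero
    (h.isWaveSolution.continuousOn.uncurry_right x hx) (h.integrableOn hxb) fun τ hτ =>
      (h.frequencyMode_eq hτ hxb).trans (by rw [(hzero τ hτ).1, (hzero τ hτ).2]; ring)
  exact hfx ((h.isWaveSolution.initial hx).symm.trans (hux self_mem_Ici))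

lemma stringDet_eq_zero_of_cauchyData (h₁ : IsDecayingWave c0 b c₁ f₁ u₁)
    (h₂ : IsDecayingWave c0 b c₂ f₂ u₂) (hb : 0 ≤ b) (hτ : 0 < τ)
    (hmode : frequencyMode u₁ τ b = frequencyMode u₂ τ b)
    (hmode' : frequencyMode (spaceDeriv u₁) τ b = frequencyMode (spaceDeriv u₂) τ b)
    (hne : frequencyMode u₁ τ b ≠ 0 ∨ frequencyMode (spaceDeriv u₁) τ b ≠ 0) :
    stringDet (stringDensity c₁) (stringDensity c₂) b 0 0 (-τ ^ 2) = 0 := by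
  have hzero₁ := h₁.frequencyMode_eq hτ (left_mem_Icc.2 hb)
  have hzero₂ := h₂.frequencyMode_eq hτ (left_mem_Icc.2 hb)
  rw [h₁.isWaveSolution.frequencyMode_zero] at hzero₁
  rw [h₂.isWaveSolution.frequencyMode_zero, ← hmode, ← hmode'] at hzero₂
  set φ₁ := stringSeries (stringDensity c₁) b 0 1 (-τ ^ 2) 0
  set φ₂ := stringSeries (stringDensity c₂) b 0 1 (-τ ^ 2) 0
  set θ₁ := stringSeries (stringDensity c₁) b 1 0 (-τ ^ 2) 0
  set θ₂ := stringSeries (stringDensity c₂) b 1 0 (-τ ^ 2) 0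
  change θ₁ * φ₂ - θ₂ * φ₁ = 0
  rcases hne with hne | hne
  · refine (mul_eq_zero.1 ?_).resolve_left hne
    linear_combination φ₁ * hzero₂ - φ₂ * hzero₁
  · refine (mul_eq_zero.1 ?_).resolve_left hne
    linear_combination θ₂ * hzero₁ - θ₁ * hzero₂

lemma frequencyMode_eq_of_measurement (hmeas : ∀ t ∈ Ici 0, u₁ t b = u₂ t b) (τ : ℝ) :
    frequencyMode u₁ τ b = frequencyMode u₂ τ b :=
  cosTransform_congr (fun t ht => hmeas t (mem_Ioi.1 ht).le) τ

section Measurement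

variable (h₁ : IsDecayingWave c0 b c₁ f₁ u₁) (h₂ : IsDecayingWave c0 b c₂ f₂ u₂) (hb : 0 < b)
  (hmeas : ∀ t ∈ Ici 0, u₁ t b = u₂ t b)

include h₁ h₂ hb hmeas

lemma spaceDeriv_eq_of_measurement (ht : 0 ≤ t) : spaceDeriv u₁ t b = spaceDeriv u₂ t b := by
  have hc0 := h₁.speed_pos hb.le
  have hout₁ := h₁.isWaveSolution.timeDeriv_add_mul_spaceDeriv_eq_zero hc0 hb.le h₁.speed_eq
    h₁.initial_eq_zero ht le_rfl
  have hout₂ := h₂.isWaveSolution.timeDeriv_add_mul_spaceDeriv_eq_zero hc0 hb.le h₂.speed_eq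
    h₂.initial_eq_zero ht le_rfl
  have htime : timeDeriv u₁ t b = timeDeriv u₂ t b := derivWithin_congr hmeas (hmeas t ht)
  refine mul_left_cancel₀ hc0.ne' ?_
  linear_combination hout₁ - hout₂ - htime

lemma frequencyMode_spaceDeriv_eq_of_measurement (τ : ℝ) :
    frequencyMode (spaceDeriv u₁) τ b = frequencyMode (spaceDeriv u₂) τ b :=
  cosTransform_congr
    (fun _ ht => spaceDeriv_eq_of_measurement h₁ h₂ hb hmeas (mem_Ioi.1 ht).le) τ

lemma stringDet_eq_zero_of_measurement (hf : ∃ x ∈ Ici 0, f₁ x ≠ 0) (z : ℝ) :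
    stringDet (stringDensity c₁) (stringDensity c₂) b 0 0 z = 0 := by
  have hleft : (0 : ℝ) ∈ Icc 0 b := left_mem_Icc.2 hb.le
  have hright : b ∈ Icc 0 b := right_mem_Icc.2 hb.le
  obtain ⟨τ₀, hτ₀, hne⟩ := h₁.exists_cauchyData_ne_zero hf
  have hne_near : ∀ᶠ τ in 𝓝 τ₀, frequencyMode u₁ τ b ≠ 0 ∨ frequencyMode (spaceDeriv u₁) τ b ≠ 0 :=
    hne.elim
      (fun h => ((continuous_cosTransform (h₁.integrableOn hright)).continuousAt.eventually_ne
        h).mono fun _ => Or.inl)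
      (fun h => ((continuous_cosTransform (h₁.integrableOn_spaceDeriv
        hright)).continuousAt.eventually_ne h).mono fun _ => Or.inr)
  have hdet : ∀ᶠ τ in 𝓝 τ₀,
      stringDet (stringDensity c₁) (stringDensity c₂) b 0 0 (-τ ^ 2) = 0 := by
    filter_upwards [hne_near, lt_mem_nhds hτ₀] with τ hneτ hτ
    exact h₁.stringDet_eq_zero_of_cauchyData h₂ hb.le hτ (frequencyMode_eq_of_measurement hmeas τ)
      (frequencyMode_spaceDeriv_eq_of_measurement h₁ h₂ hb hmeas τ) hneτ
  have hsq : Tendsto (fun τ : ℝ => -τ ^ 2) (𝓝[≠] τ₀) (𝓝[≠] (-τ₀ ^ 2)) :=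
    (hasDerivAt_pow 2 τ₀).fun_neg.tendsto_nhdsNE (by simpa using hτ₀.ne')
  exact stringDet_eq_zero_of_frequently h₁.isSpeedOn.continuousOn_stringDensity
    h₂.isSpeedOn.continuousOn_stringDensity hleft hleft
    (hsq.frequently (hdet.filter_mono nhdsWithin_le_nhds).frequently) z

lemma eqOn_speed_of_measurement (hf : ∃ x ∈ Ici 0, f₁ x ≠ 0) : EqOn c₁ c₂ (Ici 0) := by
  have hmedium : EqOn c₁ c₂ (Icc 0 b) := h₁.isSpeedOn.eqOn_of_stringDet_eq_zero h₂.isSpeedOn hb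
    fun l => stringDet_eq_zero_of_measurement h₁ h₂ hb hmeas hf (l ^ 2)
  intro x hx
  rcases le_total x b with hxb | hbx
  · exact hmedium ⟨hx, hxb⟩
  · rw [h₁.speed_eq x hbx, h₂.speed_eq x hbx]

lemma eqOn_initial_of_measurement (hc : EqOn c₁ c₂ (Icc 0 b)) : EqOn f₁ f₂ (Ici 0) := by
  intro x hx
  rcases le_total x b with hxb | hbx
  · refine h₁.initial_eq_of_frequencyMode_eq h₂ ⟨hx, hxb⟩ fun τ hτ => ?_
    have hr : EqOn (stringDensity c₂) (stringDensity c₁) (Ioo 0 b) := fun y hy => by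
      rw [stringDensity, stringDensity, hc (Ioo_subset_Icc_self hy)]
    rw [h₁.frequencyMode_eq hτ ⟨hx, hxb⟩,
      ((h₂.isStringSolution hτ).congr_density hr).eq_stringSeries_combination
        h₁.isSpeedOn.continuousOn_stringDensity ⟨hx, hxb⟩,
      frequencyMode_eq_of_measurement hmeas τ,
      frequencyMode_spaceDeriv_eq_of_measurement h₁ h₂ hb hmeas τ]
  · rw [h₁.initial_eq_zero x hbx, h₂.initial_eq_zero x hbx]

end Measurement

end IsDecayingWave

end Uniqueness

end Wave

theorem statement0_general {c0 b : ℝ} {c₁ c₂ f₁ f₂ : ℝ → ℝ} {u₁ u₂ : ℝ → ℝ → ℝ} (hb : 0 < b)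
    (h₁ : IsDecayingWave c0 b c₁ f₁ u₁) (h₂ : IsDecayingWave c0 b c₂ f₂ u₂)
    (hf₁ : ∃ x ∈ Ici (0 : ℝ), f₁ x ≠ 0) (hmeas : ∀ t ∈ Ici (0 : ℝ), u₁ t b = u₂ t b) :
    EqOn f₁ f₂ (Ici 0) ∧ EqOn c₁ c₂ (Ici 0) := by
  have hc : EqOn c₁ c₂ (Ici 0) := h₁.eqOn_speed_of_measurement h₂ hb hmeas hf₁
  exact ⟨h₁.eqOn_initial_of_measurement h₂ hb hmeas (hc.mono Icc_subset_Ici_self), hc⟩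

/-- simultaneous determination of the wave speed and the initial data from
the single passive boundary measurement `u(t,1)`, `t ≥ 0`. -/
theorem statement0
    (c0 : ℝ) (hc0 : 0 < c0)
    (c₁ c₂ f₁ f₂ : ℝ → ℝ) (u₁ u₂ : ℝ → ℝ → ℝ)
    (hc₁ : IsWaveSpeed c0 c₁) (hc₂ : IsWaveSpeed c0 c₂)
    (hf₁C : ContDiffOn ℝ 2 f₁ (Ici 0)) (hf₂C : ContDiffOn ℝ 2 f₂ (Ici 0))
    (hf₁0 : ∃ x ∈ Ici (0:ℝ), f₁ x ≠ 0) (hf₂0 : ∃ x ∈ Ici (0:ℝ), f₂ x ≠ 0)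
    (hs₁ : ∀ x ∈ Ici (0:ℝ), x ∉ Ioo (0:ℝ) 1 → f₁ x = 0)
    (hs₂ : ∀ x ∈ Ici (0:ℝ), x ∉ Ioo (0:ℝ) 1 → f₂ x = 0)
    (hu₁ : IsWaveSolution c₁ f₁ u₁) (hu₂ : IsWaveSolution c₂ f₂ u₂)
    (hd₁ : DecaysExp u₁) (hd₂ : DecaysExp u₂)
    (hmeas : ∀ t ∈ Ici (0:ℝ), u₁ t 1 = u₂ t 1) :
    EqOn f₁ f₂ (Ici 0) ∧ EqOn c₁ c₂ (Ici 0) :=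
  statement0_general one_pos (hu₁.isDecayingWave hc₁ hs₁ hd₁) (hu₂.isDecayingWave hc₂ hs₂ hd₂) hf₁0
    hmeas
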